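/- Fix an integer k ≥ 1, a real ε with 0 < ε < 1/3, exponents e_1,…,e_k ∈ {1,2}, and positive integers r_1,…,r_k such that for each i either e_i = 1 and (r_i is odd or r_i = 2), or e_i = 2 and r_i = 1. Set d := 1 if e_i = 1 and r_i = 2 for all i, and d := 0 otherwise; set r := the smallest odd r_i if some r_i is odd, and r := 0 otherwise. Then there is a constant C = C(k, ε, (e_i), (r_i)) such that for all real X ≥ 2 and all distinct primes p_1, …, p_k ≥ 5 with p_1⋯p_k ≤ X^{1/3−ε}: if some r_j is odd, then | Σ_{(A,B)∈E(X)} ∏_{i=1}^{k} λ_{A,B}(p_i^{e_i})^{r_i} | ≤ C·2^{r}·(p_1⋯p_k)·X^{1/2}; and otherwise | Σ_{(A,B)∈E(X)} ∏_{i=1}^{k} λ_{A,B}(p_i^{e_i})^{r_i} − d·|E(X)| | ≤ C·( (p_1⋯p_k)·X^{1/2} + (Σ_{i=1}^{k} 1/p_i)·X^{5/6} ). -/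

import Mathlib

/-- Condition (M): for every prime `q`, `q⁴ ∣ A` implies `q⁶ ∤ B`. -/
def CondM (A B : ℤ) : Prop := ∀ q : ℕ, q.Prime → (q : ℤ) ^ 4 ∣ A → ¬ (q : ℤ) ^ 6 ∣ B

/-- The family `E(X)`: pairs `(A,B)` with `4A³+27B² ≠ 0`, naive height at most `X`,
satisfying condition (M). -/
def Efam (X : ℝ) : Set (ℤ × ℤ) :=
  {AB | 4 * AB.1 ^ 3 + 27 * AB.2 ^ 2 ≠ 0 ∧ ((max (|AB.1| ^ 3) (AB.2 ^ 2) : ℤ) : ℝ) ≤ X ∧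
        CondM AB.1 AB.2}

/-- `N_p(A,B)`: the number of `F_p`-rational points of the projective plane cubic
`y²z = x³ + Axz² + Bz³`. -/
noncomputable def Np (p : ℕ) (hp : p.Prime) (A B : ℤ) : ℕ :=
  letI : Fact p.Prime := ⟨hp⟩
  {P : Projectivization (ZMod p) (Fin 3 → ZMod p) |
    (P.rep 1) ^ 2 * P.rep 2 =
      (P.rep 0) ^ 3 + (A : ZMod p) * P.rep 0 * (P.rep 2) ^ 2 +
        (B : ZMod p) * (P.rep 2) ^ 3}.ncard

/-- `a_p(A,B) = p + 1 − N_p(A,B)`. -/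
noncomputable def apFrob (p : ℕ) (hp : p.Prime) (A B : ℤ) : ℤ :=
  (p : ℤ) + 1 - (Np p hp A B : ℤ)

/-- The normalized Dirichlet coefficient `λ(p^e)` for `e ∈ {1, 2}`:
`λ(p) = a_p/√p`; `λ(p²) = λ(p)² − 1` for good reduction and `λ(p)²` otherwise. -/
noncomputable def lamPow (p : ℕ) (hp : p.Prime) (A B : ℤ) (e : ℕ) : ℝ :=
  if e = 2 then
    (if (p : ℤ) ∣ (4 * A ^ 3 + 27 * B ^ 2) then ((apFrob p hp A B : ℝ) / Real.sqrt p) ^ 2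
     else ((apFrob p hp A B : ℝ) / Real.sqrt p) ^ 2 - 1)
  else (apFrob p hp A B : ℝ) / Real.sqrt p

open Polynomial in
theorem stp_X_pow_dvd {p : ℕ} [Fact p.Prime] (hp2 : p ≠ 2) (f : (ZMod p)[X]) (hdeg : f.natDegree = 3)
    (h0 : f.coeff 0 ≠ 0) (c : ℕ) (hc : 2 * c + 3 ≤ p) (r s : (ZMod p)[X])
    (hr : r.degree < c) (hs : s.degree < c)
    (h : (X : (ZMod p)[X]) ^ p ∣ r + s * f ^ ((p - 1) / 2)) : r = 0 ∧ s = 0 := by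
  have hpp : p.Prime := Fact.out
  have hodd : p % 2 = 1 := (hpp.eq_two_or_odd).resolve_left hp2
  have hf0 : f ≠ 0 := by rintro rfl; simp at h0
  have h1 : (X : (ZMod p)[X]) ^ p ∣ r ^ 2 * f - s ^ 2 * f ^ p := by
    have e : r ^ 2 * f - s ^ 2 * f ^ p
        = (r + s * f ^ ((p - 1) / 2)) * ((r - s * f ^ ((p - 1) / 2)) * f) := by
      have : f ^ p = f ^ ((p - 1) / 2) * f ^ ((p - 1) / 2) * f := by
        rw [← pow_add, ← pow_succ]; congr 1; omega
      rw [this]; ring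
    rw [e]; exact Dvd.dvd.mul_right h _
  have h2 : (X : (ZMod p)[X]) ^ p ∣ f ^ p - C (f.coeff 0) := by
    have : f ^ p - C (f.coeff 0) = (f - C (f.coeff 0)) ^ p := by
      rw [sub_pow_char, ← C_pow, ZMod.pow_card]
    rw [this]
    apply pow_dvd_pow_of_dvd
    rw [X_dvd_iff]; simp
  have h3 : (X : (ZMod p)[X]) ^ p ∣ r ^ 2 * f - s ^ 2 * C (f.coeff 0) := by
    have e : r ^ 2 * f - s ^ 2 * C (f.coeff 0) = (r ^ 2 * f - s ^ 2 * f ^ p)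
      + s ^ 2 * (f ^ p - C (f.coeff 0)) := by ring
    rw [e]; exact dvd_add h1 (Dvd.dvd.mul_left h2 _)
  have hr' : r ≠ 0 → r.natDegree < c := fun h => (natDegree_lt_iff_degree_lt h).2 hr
  have hs' : s ≠ 0 → s.natDegree < c := fun h => (natDegree_lt_iff_degree_lt h).2 hs
  have d1 : (r ^ 2 * f).degree < (p : ℕ) := by
    by_cases hr0 : r = 0
    · simp [hr0]
    · rw [← natDegree_lt_iff_degree_lt (by positivity)]
      rw [natDegree_mul (by positivity) hf0, natDegree_pow, hdeg]
      have := hr' hr0; omega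
  have d2 : (s ^ 2 * C (f.coeff 0)).degree < (p : ℕ) := by
    by_cases hr0 : s = 0
    · simp [hr0]
    · rw [← natDegree_lt_iff_degree_lt (mul_ne_zero (by positivity) (by simpa using h0))]
      rw [natDegree_mul_C h0, natDegree_pow]
      have := hs' hr0; omega
  have h4 : r ^ 2 * f - s ^ 2 * C (f.coeff 0) = 0 := by
    apply eq_zero_of_dvd_of_degree_lt h3
    rw [degree_X_pow]
    exact lt_of_le_of_lt (degree_sub_le _ _) (max_lt d1 d2)
  have hr0 : r = 0 := by
    by_contra hr0
    have := congrArg natDegree (sub_eq_zero.1 h4)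
    rw [natDegree_mul (by positivity) hf0, natDegree_pow, hdeg, natDegree_mul_C h0, natDegree_pow] at this
    omega
  refine ⟨hr0, ?_⟩
  subst hr0
  by_contra hs0
  have : s ^ 2 * C (f.coeff 0) ≠ 0 := mul_ne_zero (by positivity) (by simpa using h0)
  apply this
  have := h4
  simp only [ne_eq, OfNat.ofNat_ne_zero, not_false_eq_true, zero_pow, zero_mul, zero_sub, neg_eq_zero] at this
  exact this

open Polynomial in
theorem stp_indep {p : ℕ} [Fact p.Prime] (hp2 : p ≠ 2) (f : (ZMod p)[X]) (hdeg : f.natDegree = 3)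
    (h0 : f.coeff 0 ≠ 0) (c : ℕ) (hc : 2 * c + 3 ≤ p) (J : ℕ) : ∀ (r s : ℕ → (ZMod p)[X])
    (_ : ∀ j, (r j).degree < c) (_ : ∀ j, (s j).degree < c)
    (_ : ∑ j ∈ Finset.range J, (r j + s j * f ^ ((p - 1) / 2)) * X ^ (p * j) = 0),
    ∀ j < J, r j = 0 ∧ s j = 0 := by
  induction J with
  | zero => intro r s _ _ _ j hj; omega
  | succ J ih =>
    intro r s hr hs h
    rw [Finset.sum_range_succ'] at h
    have e : ∑ j ∈ Finset.range J, (r (j+1) + s (j+1) * f ^ ((p - 1) / 2)) * X ^ (p * (j+1))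
      = X ^ p * ∑ j ∈ Finset.range J, (r (j+1) + s (j+1) * f ^ ((p - 1) / 2)) * X ^ (p * j) := by
      rw [Finset.mul_sum]; apply Finset.sum_congr rfl; intro j _; ring
    rw [e] at h
    simp only [mul_zero, pow_zero, mul_one] at h
    have hd : (X : (ZMod p)[X]) ^ p ∣ r 0 + s 0 * f ^ ((p - 1) / 2) := by
      rw [← dvd_add_right (Dvd.intro _ rfl), h]; exact dvd_zero _
    have := stp_X_pow_dvd hp2 f hdeg h0 c hc _ _ (hr 0) (hs 0) hd
    rw [this.1, this.2] at h
    simp only [zero_mul, add_zero, mul_eq_zero, pow_eq_zero_iff', X_ne_zero, false_and, false_or] at h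
    intro j hj
    cases j with
    | zero => exact this
    | succ j => exact ih (fun j => r (j+1)) (fun j => s (j+1)) (fun j => hr _) (fun j => hs _) h j (by omega)

open Polynomial in
/-- The first-order operator arising from differentiating a product with a power of f. -/
noncomputable def stpT {F : Type*} [Field F] (f : F[X]) (n : ℕ) : F[X] →ₗ[F] F[X] :=
  LinearMap.mulLeft F ((n : F[X]) * derivative f) + (LinearMap.mulLeft F f) ∘ₗ (derivative : F[X] →ₗ[F] F[X])

open Polynomial in
noncomputable def stpU {F : Type*} [Field F] (f : F[X]) (n : ℕ) : ℕ → (F[X] →ₗ[F] F[X])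
  | 0 => LinearMap.id
  | k + 1 => stpT f (n - k) ∘ₗ stpU f n k

open Polynomial in
theorem stpT_apply {F : Type*} [Field F] (f : F[X]) (n : ℕ) (r : F[X]) :
    stpT f n r = (n : F[X]) * derivative f * r + f * derivative r := by
  simp [stpT, mul_assoc]

open Polynomial in
theorem stpU_deriv {F : Type*} [Field F] (f : F[X]) (n : ℕ) (r h : F[X]) (hh : derivative h = 0) (k : ℕ) (hk : k ≤ n) :
    derivative^[k] (f ^ n * r * h) = f ^ (n - k) * stpU f n k r * h := by
  induction k with
  | zero => simp [stpU]
  | succ k ih =>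
    rw [Function.iterate_succ_apply', ih (by omega)]
    simp only [stpU, LinearMap.comp_apply, stpT_apply]
    obtain ⟨m, hm⟩ : ∃ m, n - k = m + 1 := ⟨n - k - 1, by omega⟩
    have : n - (k + 1) = m := by omega
    rw [hm, this]
    simp only [derivative_mul, hh, derivative_pow_succ]
    push_cast
    simp only [mul_zero, add_zero, map_add, map_natCast, map_one]
    ring

open Polynomial in
theorem stpU_degree {F : Type*} [Field F] (f : F[X]) (hdeg : f.natDegree = 3) (n k : ℕ) (r : F[X]) :
    (stpU f n k r).natDegree ≤ r.natDegree + 2 * k := by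
  induction k with
  | zero => simp [stpU]
  | succ k ih =>
    simp only [stpU, LinearMap.comp_apply, stpT_apply]
    set u := stpU f n k r
    have h1 : ((n - k : ℕ) * derivative f * u : F[X]).natDegree ≤ u.natDegree + 2 := by
      refine natDegree_mul_le.trans ?_
      have : (((n - k : ℕ) : F[X]) * derivative f).natDegree ≤ 2 := by
        refine natDegree_mul_le.trans ?_
        have := natDegree_derivative_le f
        rw [natDegree_natCast]; omega
      omega
    have h2 : (f * derivative u).natDegree ≤ u.natDegree + 2 := by
      by_cases hu : derivative u = 0
      · simp [hu]
      · refine natDegree_mul_le.trans ?_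
        have h3 := natDegree_derivative_le u
        have : u.natDegree ≠ 0 := by
          intro h
          exact hu (derivative_of_natDegree_zero h)
        omega
    refine (natDegree_add_le _ _).trans ?_
    have := max_le h1 h2
    omega

open Polynomial in
noncomputable def stpPhi {F : Type*} [Field F] (f : F[X]) (a : F) (l q c J N : ℕ) :
    ((Fin J → degreeLT F c) × (Fin J → degreeLT F c)) →ₗ[F] (Fin l → Fin N → F) where
  toFun v k i := (∑ j, (stpU f l k (v.1 j : F[X]) + a • stpU f (l + q) k (v.2 j : F[X])) * X ^ (j : ℕ)).coeff i
  map_add' v w := by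
    ext k i
    simp only [Prod.fst_add, Prod.snd_add, Pi.add_apply, Submodule.coe_add, map_add, smul_add]
    rw [← coeff_add, ← Finset.sum_add_distrib]
    congr 2; ext1 j; ring
  map_smul' t v := by
    ext k i
    simp only [Prod.smul_fst, Prod.smul_snd, Pi.smul_apply, Submodule.coe_smul, map_smul, RingHom.id_apply]
    rw [← coeff_smul, Finset.smul_sum]
    congr 2; ext1 j
    rw [← smul_mul_assoc, smul_add, smul_comm a t]

open Polynomial in
theorem stp_main {p : ℕ} [Fact p.Prime] (hp2 : p ≠ 2) (f : (ZMod p)[X]) (hdeg : f.natDegree = 3)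
    (h0 : f.coeff 0 ≠ 0) (c l J : ℕ) (hc : 2 * c + 3 ≤ p) (hl : 0 < l) (hlp : l ≤ p)
    (hcount : l * (c + 2 * l + J) < 2 * (c * J)) (a : ZMod p) :
    l * (Finset.univ.filter fun x : ZMod p => (f.eval x) ^ ((p - 1) / 2) = a).card
      ≤ 3 * l + c + 3 * ((p - 1) / 2) + p * (J - 1) := by
  classical
  set q := (p - 1) / 2 with hq
  have hc0 : 0 < c := by
    rcases Nat.eq_zero_or_pos c with h | h
    · subst h; simp at hcount
    · exact h
  have hJ0 : 0 < J := by
    rcases Nat.eq_zero_or_pos J with h | h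
    · subst h; simp at hcount
    · exact h
  have hf0 : f ≠ 0 := by rintro rfl; simp at h0
  set Φ := stpPhi f a l q c J (c + 2 * l + J)
  have hker : LinearMap.ker Φ ≠ ⊥ := by
    apply LinearMap.ker_ne_bot_of_finrank_lt
    have e1 : Module.finrank (ZMod p) (degreeLT (ZMod p) c) = c := by
      rw [(degreeLTEquiv (ZMod p) c).finrank_eq]; simp
    simp only [Module.finrank_prod, Module.finrank_pi_fintype, e1, Module.finrank_self]
    simp only [Finset.sum_const, Finset.card_univ, Fintype.card_fin, smul_eq_mul, mul_one]
    calc l * (c + 2 * l + J) < 2 * (c * J) := hcount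
      _ = J * c + J * c := by ring
  obtain ⟨v, hv, hv0⟩ := Submodule.exists_mem_ne_zero_of_ne_bot hker
  have hv' : ∀ k : Fin l, ∀ i : Fin (c + 2 * l + J), (∑ j, (stpU f l k (v.1 j : (ZMod p)[X]) + a • stpU f (l + q) k (v.2 j : (ZMod p)[X])) * X ^ (j : ℕ)).coeff i = 0 := by
    intro k i
    exact congrFun (congrFun (LinearMap.mem_ker.1 hv) k) i
  let r : ℕ → (ZMod p)[X] := fun j => if h : j < J then v.1 ⟨j, h⟩ else 0
  let s : ℕ → (ZMod p)[X] := fun j => if h : j < J then v.2 ⟨j, h⟩ else 0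
  have hr : ∀ j, (r j).degree < c := by
    intro j; simp only [r]; split_ifs with h
    · exact mem_degreeLT.1 (v.1 ⟨j, h⟩).2
    · simp
  have hs : ∀ j, (s j).degree < c := by
    intro j; simp only [s]; split_ifs with h
    · exact mem_degreeLT.1 (v.2 ⟨j, h⟩).2
    · simp
  have ndlt : ∀ u : (ZMod p)[X], u.degree < c → u.natDegree < c := by
    intro u hu
    by_cases h : u = 0
    · simp [h, hc0]
    · exact (natDegree_lt_iff_degree_lt h).2 hu
  have hV : ∀ k < l, ∑ j ∈ Finset.range J, (stpU f l k (r j) + a • stpU f (l + q) k (s j)) * X ^ j = 0 := by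
    intro k hk
    have e : ∑ j ∈ Finset.range J, (stpU f l k (r j) + a • stpU f (l + q) k (s j)) * X ^ j
      = ∑ j : Fin J, (stpU f l k (v.1 j : (ZMod p)[X]) + a • stpU f (l + q) k (v.2 j : (ZMod p)[X])) * X ^ (j : ℕ) := by
      rw [Finset.sum_range]
      apply Finset.sum_congr rfl
      intro j _
      simp [r, s]
    ext i
    by_cases hi : i < c + 2 * l + J
    · rw [e, hv' ⟨k, hk⟩ ⟨i, hi⟩, coeff_zero]
    · rw [coeff_zero]
      apply coeff_eq_zero_of_natDegree_lt
      refine lt_of_le_of_lt (natDegree_sum_le_of_forall_le (n := c + 2 * l + J - 1) _ _ ?_) (by omega)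
      intro j hj
      rw [Finset.mem_range] at hj
      refine natDegree_mul_le.trans ?_
      rw [natDegree_X_pow]
      have h1 := (stpU_degree f hdeg l k (r j))
      have h2 := (stpU_degree f hdeg (l + q) k (s j))
      have h3 := natDegree_smul_le a (stpU f (l + q) k (s j))
      have h4 := natDegree_add_le (stpU f l k (r j)) (a • stpU f (l + q) k (s j))
      have h5 := ndlt _ (hr j)
      have h6 := ndlt _ (hs j)
      have := max_le (a := (stpU f l k (r j)).natDegree) (b := (a • stpU f (l + q) k (s j)).natDegree) (c := c - 1 + 2 * k) (by omega) (by omega)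
      omega
  set R0 : (ZMod p)[X] := ∑ j ∈ Finset.range J, (r j + s j * f ^ q) * X ^ (p * j) with hR0
  have hR0ne : R0 ≠ 0 := by
    intro h
    apply hv0
    have := stp_indep hp2 f hdeg h0 c hc J r s hr hs h
    ext j
    · have := (this j j.2).1
      simp only [r] at this
      simp at this
      simp [this]
    · have := (this j j.2).2
      simp only [s] at this
      simp at this
      simp [this]
  set R := f ^ l * R0 with hR
  have hRne : R ≠ 0 := mul_ne_zero (pow_ne_zero _ hf0) hR0ne
  have hRdeg : R.natDegree ≤ 3 * l + c + 3 * q + p * (J - 1) := by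
    rw [hR]
    refine natDegree_mul_le.trans ?_
    rw [natDegree_pow, hdeg]
    have : R0.natDegree ≤ c + 3 * q + p * (J - 1) := by
      apply natDegree_sum_le_of_forall_le
      intro j hj
      rw [Finset.mem_range] at hj
      refine natDegree_mul_le.trans ?_
      rw [natDegree_X_pow]
      have h5 := ndlt _ (hr j)
      have h6 := ndlt _ (hs j)
      have h7 : (s j * f ^ q).natDegree ≤ c + 3 * q := by
        refine natDegree_mul_le.trans ?_
        rw [natDegree_pow, hdeg]; omega
      have h4 := natDegree_add_le (r j) (s j * f ^ q)
      have h8 := max_le (a := (r j).natDegree) (b := (s j * f ^ q).natDegree) (c := c + 3 * q) (by omega) (by omega)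
      have : p * j ≤ p * (J - 1) := Nat.mul_le_mul_left _ (by omega)
      omega
    omega
  have hD : ∀ x : ZMod p, (f.eval x) ^ q = a → ∀ k < l, (derivative^[k] R).IsRoot x := by
    intro x hx k hk
    have e1 : R = ∑ j ∈ Finset.range J, (f ^ l * r j * X ^ (p * j) + f ^ (l + q) * s j * X ^ (p * j)) := by
      rw [hR, hR0, Finset.mul_sum]
      apply Finset.sum_congr rfl; intro j _; ring
    have hX : ∀ j, derivative ((X : (ZMod p)[X]) ^ (p * j)) = 0 := by
      intro j; rw [derivative_X_pow]; simp
    rw [e1, iterate_derivative_sum, IsRoot.def, eval_finsetSum]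
    have e2 : ∀ j ∈ Finset.range J, eval x (derivative^[k] (f ^ l * r j * X ^ (p * j) + f ^ (l + q) * s j * X ^ (p * j)))
        = (f.eval x) ^ (l - k) * eval x ((stpU f l k (r j) + a • stpU f (l + q) k (s j)) * X ^ j) := by
      intro j _
      rw [iterate_map_add, stpU_deriv f l _ _ (hX j) k hk.le, stpU_deriv f (l+q) _ _ (hX j) k (by omega)]
      have : l + q - k = (l - k) + q := by omega
      rw [this]
      simp only [eval_add, eval_mul, eval_pow, eval_X, eval_smul, smul_eq_mul, pow_add, pow_mul, ZMod.pow_card, hx]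
      ring
    rw [Finset.sum_congr rfl e2, ← Finset.mul_sum, ← eval_finsetSum, hV k hk]
    simp
  have hmult : ∀ x ∈ (Finset.univ.filter fun x : ZMod p => (f.eval x) ^ q = a), l ≤ R.roots.count x := by
    intro x hx
    rw [count_roots]
    have := lt_rootMultiplicity_of_isRoot_iterate_derivative_of_mem_nonZeroDivisors (p := R) (t := x) (n := l - 1) hRne
      (fun m hm => hD x (Finset.mem_filter.1 hx).2 m (by omega)) (by
        rw [mem_nonZeroDivisors_iff_ne_zero, Ne, CharP.cast_eq_zero_iff (ZMod p) p, (Fact.out : p.Prime).dvd_factorial]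
        omega)
    omega
  calc l * _ = ∑ x ∈ (Finset.univ.filter fun x : ZMod p => (f.eval x) ^ q = a), l := by
        rw [Finset.sum_const, smul_eq_mul, mul_comm]
    _ ≤ ∑ x ∈ (Finset.univ.filter fun x : ZMod p => (f.eval x) ^ q = a), R.roots.count x := Finset.sum_le_sum hmult
    _ ≤ ∑ x ∈ (Finset.univ : Finset (ZMod p)), R.roots.count x := Finset.sum_le_sum_of_subset (Finset.filter_subset _ _)
    _ = Multiset.card R.roots := Multiset.sum_count_eq_card (by simp)
    _ ≤ R.natDegree := card_roots' R
    _ ≤ _ := hRdeg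

open Polynomial in
theorem stp_charsum0 {p : ℕ} [Fact p.Prime] (hp5 : 5 ≤ p) (f : (ZMod p)[X]) (hdeg : f.natDegree = 3)
    (h0 : f.coeff 0 ≠ 0) :
    |((∑ x : ZMod p, quadraticChar (ZMod p) (f.eval x) : ℤ) : ℝ)| ≤ 48 * Real.sqrt p := by
  classical
  have hpp : p.Prime := Fact.out
  have hodd : p % 2 = 1 := (hpp.eq_two_or_odd).resolve_left (by omega)
  have hsq : Real.sqrt p * Real.sqrt p = p := Real.mul_self_sqrt (by positivity)
  have hs1 : 1 ≤ Real.sqrt p := by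
    rw [Real.one_le_sqrt]; exact_mod_cast (by omega : 1 ≤ p)
  have hs0 : 0 ≤ Real.sqrt p := by positivity
  have htriv : |((∑ x : ZMod p, quadraticChar (ZMod p) (f.eval x) : ℤ) : ℝ)| ≤ p := by
    rw [← Int.cast_abs]
    have : |∑ x : ZMod p, quadraticChar (ZMod p) (f.eval x)| ≤ ∑ x : ZMod p, (1 : ℤ) := by
      refine (Finset.abs_sum_le_sum_abs _ _).trans (Finset.sum_le_sum fun x _ => ?_)
      rcases quadraticChar_isQuadratic (ZMod p) (f.eval x) with h | h | h <;> rw [h] <;> simp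
    simp only [Finset.sum_const, Finset.card_univ, ZMod.card, nsmul_eq_mul, mul_one] at this
    exact_mod_cast this
  set c := (p - 3) / 2 with hc
  have hpc : p = 2 * c + 3 := by omega
  set n := Nat.sqrt c with hn
  have hn1 : n * n ≤ c := Nat.sqrt_le c
  have hn2 : c < (n + 1) * (n + 1) := Nat.lt_succ_sqrt c
  by_cases hn3 : n < 2
  · have hc4 : c < 4 := by nlinarith
    have hp11 : (p : ℝ) ≤ 11 := by exact_mod_cast (by omega : p ≤ 11)
    refine htriv.trans ?_
    linarith
  push Not at hn3
  have key : ∀ a : ZMod p, 2 * n * (Finset.univ.filter fun x : ZMod p => (f.eval x) ^ ((p - 1) / 2) = a).card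
      ≤ 6 * n + (n + 13) * p := by
    intro a
    have hh : (2 * n) * (c + 2 * (2 * n) + (n + 12)) < 2 * (c * (n + 12)) := by nlinarith
    have := stp_main (by omega) f hdeg h0 c (2 * n) (n + 12) (by omega) (by omega) (by nlinarith) hh a
    refine this.trans ?_
    have e : n + 12 - 1 = n + 11 := by omega
    rw [e]
    have h2 : 3 * ((p - 1) / 2) + c ≤ 2 * p := by omega
    nlinarith
  have hF : ringChar (ZMod p) ≠ 2 := by rw [ZMod.ringChar_zmod_n]; omega
  have hcard : Fintype.card (ZMod p) / 2 = (p - 1) / 2 := by rw [ZMod.card]; omega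
  have hq0 : (p - 1) / 2 ≠ 0 := by omega
  have hne : (1 : ZMod p) ≠ -1 := by
    intro h; exact (Ring.neg_one_ne_one_of_char_ne_two hF) h.symm
  have hdich : ∀ x : ZMod p, f.eval x ≠ 0 → f.eval x ^ ((p-1)/2) = 1 ∨ f.eval x ^ ((p-1)/2) = -1 := by
    intro x hx; rw [← hcard]; exact FiniteField.pow_dichotomy hF hx
  set N1 := (Finset.univ.filter fun x : ZMod p => (f.eval x) ^ ((p - 1) / 2) = 1).card with hN1
  set Nm := (Finset.univ.filter fun x : ZMod p => (f.eval x) ^ ((p - 1) / 2) = -1).card with hNm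
  set N0 := (Finset.univ.filter fun x : ZMod p => f.eval x = 0).card with hN0
  have hsum : ∑ x : ZMod p, quadraticChar (ZMod p) (f.eval x) = (N1 : ℤ) - Nm := by
    rw [hN1, hNm, Finset.card_filter, Finset.card_filter]
    push_cast
    rw [← Finset.sum_sub_distrib]
    apply Finset.sum_congr rfl
    intro x _
    by_cases hx : f.eval x = 0
    · rw [hx, zero_pow hq0]; simp
    · rw [quadraticChar_eq_pow_of_char_ne_two hF hx, hcard]
      rcases hdich x hx with h | h <;> rw [h] <;> simp [hne, hne.symm]
  have htot : N1 + Nm + N0 = p := by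
    have : (p : ℕ) = ∑ x : ZMod p, 1 := by simp
    rw [this, hN1, hNm, hN0, Finset.card_filter, Finset.card_filter, Finset.card_filter, ← Finset.sum_add_distrib,
      ← Finset.sum_add_distrib]
    apply Finset.sum_congr rfl
    intro x _
    by_cases hx : f.eval x = 0
    · rw [hx, zero_pow hq0]; simp
    · rcases hdich x hx with h | h <;> rw [h] <;> simp [hne, hne.symm, hx]
  have hN03 : N0 ≤ 3 := by
    have hf0 : f ≠ 0 := by rintro rfl; simp at h0
    have : (Finset.univ.filter fun x : ZMod p => f.eval x = 0) ⊆ f.roots.toFinset := by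
      intro x hx
      simpa [hf0] using hx
    refine (Finset.card_le_card this).trans ((Multiset.toFinset_card_le _).trans ((card_roots' f).trans hdeg.le))
  have k1 := key 1
  have k2 := key (-1)
  rw [← hN1] at k1
  rw [← hNm] at k2
  rw [hsum]
  push_cast
  have k1' : (2 : ℝ) * n * N1 ≤ 6 * n + (n + 13) * p := by exact_mod_cast k1
  have k2' : (2 : ℝ) * n * Nm ≤ 6 * n + (n + 13) * p := by exact_mod_cast k2
  have ht : (N1 : ℝ) + Nm + N0 = p := by exact_mod_cast htot
  have h03 : (N0 : ℝ) ≤ 3 := by exact_mod_cast hN03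
  have h00 : (0 : ℝ) ≤ N0 := Nat.cast_nonneg _
  have hnR : (2 : ℝ) ≤ n := by exact_mod_cast hn3
  have hp6 : (p : ℝ) ≤ 6 * n ^ 2 := by
    have : p ≤ 6 * n ^ 2 := by nlinarith
    exact_mod_cast this
  have hs3 : Real.sqrt p ≤ 3 * n := by
    rw [Real.sqrt_le_left (by positivity)]; nlinarith
  have goal2 : |(N1 : ℝ) - Nm| * n ≤ (9 + 39 * Real.sqrt p) * n := by
    have hp3 : 13 * (p : ℝ) ≤ 39 * Real.sqrt p * n := by nlinarith
    have : |(N1 : ℝ) - Nm| * n ≤ 9 * n + 13 * p := by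
      rcases abs_cases ((N1 : ℝ) - Nm) with ⟨h, _⟩ | ⟨h, _⟩ <;> rw [h]
      · have : (Nm : ℝ) = p - N0 - N1 := by linarith
        rw [this]; nlinarith
      · have : (N1 : ℝ) = p - N0 - Nm := by linarith
        rw [this]; nlinarith
    linarith
  have := le_of_mul_le_mul_right goal2 (by linarith)
  linarith

open Polynomial in
theorem stp_charsum {p : ℕ} [Fact p.Prime] (hp5 : 5 ≤ p) (A B : ZMod p) :
    |((∑ x : ZMod p, quadraticChar (ZMod p) (x ^ 3 + A * x + B) : ℤ) : ℝ)| ≤ 48 * Real.sqrt p := by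
  classical
  set f : (ZMod p)[X] := X ^ 3 + C A * X + C B with hf
  have hdeg : f.natDegree = 3 := by rw [hf]; compute_degree!
  have hf0 : f ≠ 0 := by rintro h; rw [h] at hdeg; simp at hdeg
  obtain ⟨x0, hx0⟩ : ∃ x0, f.eval x0 ≠ 0 := by
    by_contra! h
    apply hf0
    apply eq_zero_of_natDegree_lt_card_of_eval_eq_zero' f Finset.univ (fun x _ => h x)
    rw [hdeg, Finset.card_univ, ZMod.card]; omega
  have := stp_charsum0 hp5 (f.comp (X + C x0)) (by rw [natDegree_comp, hdeg, natDegree_X_add_C]) (by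
    rw [coeff_zero_eq_eval_zero, eval_comp]; simpa using hx0)
  have e : ∑ x : ZMod p, quadraticChar (ZMod p) (x ^ 3 + A * x + B) =
     ∑ x : ZMod p, quadraticChar (ZMod p) ((f.comp (X + C x0)).eval x) := by
    rw [← Equiv.sum_comp (Equiv.addRight x0)]
    apply Finset.sum_congr rfl
    intro x _
    simp [hf, eval_comp]
  rw [e]; exact this

theorem Np_eq {p : ℕ} [hF : Fact p.Prime] (hp : p.Prime) (A B : ℤ) :
    Np p hp A B = 1 + (Finset.univ.filter fun P : ZMod p × ZMod p =>
      P.2 ^ 2 = P.1 ^ 3 + (A : ZMod p) * P.1 + (B : ZMod p)).card := by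
  classical
  let E : (Fin 3 → ZMod p) → Prop := fun v => (v 1) ^ 2 * v 2 =
      (v 0) ^ 3 + (A : ZMod p) * v 0 * (v 2) ^ 2 + (B : ZMod p) * (v 2) ^ 3
  have hE : ∀ (v : Fin 3 → ZMod p) (hv : v ≠ 0), E (Projectivization.mk (ZMod p) v hv).rep ↔ E v := by
    intro v hv
    obtain ⟨a, ha⟩ := Projectivization.exists_smul_eq_mk_rep (ZMod p) v hv
    rw [← ha]
    have h3 : (a : ZMod p) ^ 3 ≠ 0 := pow_ne_zero _ a.ne_zero
    simp only [E, Pi.smul_apply, Units.smul_def, smul_eq_mul]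
    constructor
    · intro h
      apply mul_left_cancel₀ h3
      linear_combination h
    · intro h
      linear_combination (a : ZMod p) ^ 3 * h
  have h1 : ∀ x y : ZMod p, (![x, y, 1] : Fin 3 → ZMod p) ≠ 0 := by
    intro x y h; have := congrFun h 2; simp at this
  have h2 : (![0, 1, 0] : Fin 3 → ZMod p) ≠ 0 := by
    intro h; have := congrFun h 1; simp at this
  let φ : ZMod p × ZMod p → Projectivization (ZMod p) (Fin 3 → ZMod p) :=
    fun P => Projectivization.mk (ZMod p) ![P.1, P.2, 1] (h1 _ _)
  let O : Projectivization (ZMod p) (Fin 3 → ZMod p) := Projectivization.mk (ZMod p) ![0, 1, 0] h2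
  set S := (Finset.univ.filter fun P : ZMod p × ZMod p =>
      P.2 ^ 2 = P.1 ^ 3 + (A : ZMod p) * P.1 + (B : ZMod p)) with hS
  have hφ : Function.Injective φ := by
    rintro ⟨x, y⟩ ⟨x', y'⟩ h
    simp only [φ] at h
    rw [Projectivization.mk_eq_mk_iff'] at h
    obtain ⟨a, ha⟩ := h
    have e0 := congrFun ha 0
    have e1 := congrFun ha 1
    have e2 := congrFun ha 2
    simp at e0 e1 e2
    subst e2
    simp at e0 e1
    rw [e0, e1]
  have hO : O ∉ S.image φ := by
    intro h
    obtain ⟨P, _, h⟩ := Finset.mem_image.1 h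
    simp only [φ, O] at h
    rw [Projectivization.mk_eq_mk_iff'] at h
    obtain ⟨a, ha⟩ := h
    have e2 := congrFun ha 2
    simp at e2
  have hset : {P : Projectivization (ZMod p) (Fin 3 → ZMod p) | E P.rep} = ((insert O (S.image φ) : Finset _) : Set _) := by
    ext P
    induction P using Projectivization.ind with
    | h v hv =>
    rw [Set.mem_ofPred_eq, hE]
    simp only [Finset.coe_insert, Finset.coe_image, Set.mem_insert_iff, Set.mem_image, Finset.mem_coe]
    constructor
    · intro h
      by_cases hz : v 2 = 0
      · left
        simp only [E, hz] at h
        have hx : v 0 = 0 := by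
          have : v 0 ^ 3 = 0 := by linear_combination -h
          exact pow_eq_zero_iff (by norm_num) |>.1 this
        simp only [O]
        rw [Projectivization.mk_eq_mk_iff']
        refine ⟨v 1, ?_⟩
        ext i; fin_cases i <;> simp [hx, hz]
      · right
        refine ⟨(v 0 / v 2, v 1 / v 2), ?_, ?_⟩
        · simp only [hS, Finset.mem_filter, Finset.mem_univ, true_and]
          simp only [E] at h
          field_simp
          linear_combination h
        · simp only [φ]
          rw [Projectivization.mk_eq_mk_iff']
          refine ⟨(v 2)⁻¹, ?_⟩
          ext i; fin_cases i <;> simp <;> field_simp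
    · rintro (h | ⟨P, hP, h⟩)
      · rw [← hE v hv, h, hE]
        simp [E]
      · rw [← hE v hv, ← h, hE]
        simp only [hS, Finset.mem_filter, Finset.mem_univ, true_and] at hP
        simp [E, hP]
  change Set.ncard {P : Projectivization (ZMod p) (Fin 3 → ZMod p) | E P.rep} = _
  rw [hset, Set.ncard_coe_finset, Finset.card_insert_of_notMem hO, Finset.card_image_of_injective _ hφ, add_comm]

/-- Frobenius trace as a character sum. -/
noncomputable def aF (p : ℕ) [Fact p.Prime] (A B : ZMod p) : ℤ :=
  - ∑ x : ZMod p, quadraticChar (ZMod p) (x ^ 3 + A * x + B)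

theorem apFrob_eq {p : ℕ} [hF : Fact p.Prime] (h5 : 5 ≤ p) (hp : p.Prime) (A B : ℤ) :
    apFrob p hp A B = aF p (A : ZMod p) (B : ZMod p) := by
  classical
  have hch : ringChar (ZMod p) ≠ 2 := by rw [ZMod.ringChar_zmod_n]; omega
  rw [apFrob, Np_eq hp, aF]
  have : ((Finset.univ.filter fun P : ZMod p × ZMod p =>
      P.2 ^ 2 = P.1 ^ 3 + (A : ZMod p) * P.1 + (B : ZMod p)).card : ℤ) =
      ∑ x : ZMod p, (quadraticChar (ZMod p) (x ^ 3 + A * x + B) + 1) := by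
    rw [Finset.card_filter, Fintype.sum_prod_type]
    push_cast
    apply Finset.sum_congr rfl
    intro x _
    rw [← quadraticChar_card_sqrts hch]
    have e : (Set.toFinset {y : ZMod p | y ^ 2 = x ^ 3 + (A : ZMod p) * x + B})
        = Finset.univ.filter (fun y : ZMod p => y ^ 2 = x ^ 3 + (A : ZMod p) * x + B) := by
      ext y; simp
    rw [e, Finset.card_filter]
    push_cast
    rfl
  push_cast
  rw [this, Finset.sum_add_distrib]
  simp only [Finset.sum_const, Finset.card_univ, ZMod.card, nsmul_eq_mul, mul_one]
  ring

noncomputable def lamF (p : ℕ) [Fact p.Prime] (e : ℕ) (A B : ZMod p) : ℝ :=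
  if e = 2 then
    (if 4 * A ^ 3 + 27 * B ^ 2 = 0 then ((aF p A B : ℝ) / Real.sqrt p) ^ 2
     else ((aF p A B : ℝ) / Real.sqrt p) ^ 2 - 1)
  else (aF p A B : ℝ) / Real.sqrt p

theorem lamPow_eq {p : ℕ} [hF : Fact p.Prime] (h5 : 5 ≤ p) (hp : p.Prime) (A B : ℤ) (e : ℕ) :
    lamPow p hp A B e = lamF p e (A : ZMod p) (B : ZMod p) := by
  rw [lamPow, lamF, apFrob_eq h5 hp]
  have : ((p : ℤ) ∣ (4 * A ^ 3 + 27 * B ^ 2)) ↔ (4 * (A : ZMod p) ^ 3 + 27 * (B : ZMod p) ^ 2 = 0) := by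
    rw [← ZMod.intCast_zmod_eq_zero_iff_dvd]; push_cast; rfl
  simp only [this]

theorem lam_bound {p : ℕ} [hF : Fact p.Prime] (h5 : 5 ≤ p) (A B : ZMod p) :
    |(aF p A B : ℝ) / Real.sqrt p| ≤ 48 := by
  have hs : 0 < Real.sqrt p := by rw [Real.sqrt_pos]; exact_mod_cast (by omega : 0 < p)
  rw [abs_div, abs_of_pos hs, div_le_iff₀ hs, aF]
  push_cast
  rw [abs_neg]
  have := stp_charsum h5 A B
  push_cast at this
  exact this

theorem lamF_bound {p : ℕ} [hF : Fact p.Prime] (h5 : 5 ≤ p) (e : ℕ) (A B : ZMod p) :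
    |lamF p e A B| ≤ 2305 := by
  have h := lam_bound h5 A B
  have h2 := abs_le.1 h
  have h3 : ((aF p A B : ℝ) / Real.sqrt p) ^ 2 ≤ 48 ^ 2 := sq_le_sq' h2.1 h2.2
  have h4 := sq_nonneg ((aF p A B : ℝ) / Real.sqrt p)
  rw [lamF]
  split_ifs
  · rw [abs_le]; constructor <;> linarith
  · rw [abs_le]; constructor <;> linarith
  · linarith

theorem quadChar_cube {p : ℕ} [hF : Fact p.Prime] (x : ZMod p) :
    quadraticChar (ZMod p) (x ^ 3) = quadraticChar (ZMod p) x := by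
  rw [map_pow]
  rcases quadraticChar_isQuadratic (ZMod p) x with h | h | h <;> rw [h] <;> norm_num

theorem aF_zero {p : ℕ} [hF : Fact p.Prime] (h5 : 5 ≤ p) : aF p 0 0 = 0 := by
  have hch : ringChar (ZMod p) ≠ 2 := by rw [ZMod.ringChar_zmod_n]; omega
  rw [aF]
  simp only [zero_mul, add_zero, quadChar_cube]
  rw [quadraticChar_sum_zero hch, neg_zero]

theorem lamF_zero {p : ℕ} [hF : Fact p.Prime] (h5 : 5 ≤ p) (e : ℕ) : lamF p e 0 0 = 0 := by
  simp [lamF, aF_zero h5]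

theorem aF_twist {p : ℕ} [hF : Fact p.Prime] (u A B : ZMod p) (hu : u ≠ 0) :
    aF p (u ^ 2 * A) (u ^ 3 * B) = quadraticChar (ZMod p) u * aF p A B := by
  rw [aF, aF, ← Equiv.sum_comp (Equiv.mulLeft₀ u hu), mul_neg, Finset.mul_sum]
  congr 1
  apply Finset.sum_congr rfl
  intro x _
  rw [← quadChar_cube u, ← map_mul]
  congr 1
  change (u * x) ^ 3 + u ^ 2 * A * (u * x) + u ^ 3 * B = _
  ring

theorem lamF_scale {p : ℕ} [hF : Fact p.Prime] (e : ℕ) (d A B : ZMod p) (hd : d ≠ 0) :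
    lamF p e (d ^ 4 * A) (d ^ 6 * B) = lamF p e A B := by
  have h : aF p (d ^ 4 * A) (d ^ 6 * B) = aF p A B := by
    have := aF_twist (d ^ 2) A B (pow_ne_zero _ hd)
    rw [quadraticChar_sq_one' hd, one_mul] at this
    rw [← this]; congr 1 <;> ring
  have h2 : (4 * (d ^ 4 * A) ^ 3 + 27 * (d ^ 6 * B) ^ 2 = 0) ↔ (4 * A ^ 3 + 27 * B ^ 2 = 0) := by
    have : 4 * (d ^ 4 * A) ^ 3 + 27 * (d ^ 6 * B) ^ 2 = d ^ 12 * (4 * A ^ 3 + 27 * B ^ 2) := by ring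
    rw [this, mul_eq_zero, or_iff_right (pow_ne_zero _ hd)]
  simp only [lamF, h, h2]

theorem lamF_odd_sum {p : ℕ} [hF : Fact p.Prime] (h5 : 5 ≤ p) (r : ℕ) (hr : Odd r) :
    ∑ A : ZMod p, ∑ B : ZMod p, lamF p 1 A B ^ r = 0 := by
  have hch : ringChar (ZMod p) ≠ 2 := by rw [ZMod.ringChar_zmod_n]; omega
  obtain ⟨u, hu⟩ := quadraticChar_exists_neg_one hch
  have hu0 : u ≠ 0 := by rintro rfl; simp at hu
  have h : ∑ A : ZMod p, ∑ B : ZMod p, lamF p 1 A B ^ r = - ∑ A : ZMod p, ∑ B : ZMod p, lamF p 1 A B ^ r := by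
    conv_lhs => rw [← Equiv.sum_comp (Equiv.mulLeft₀ (u ^ 2) (pow_ne_zero _ hu0))]
    rw [← Finset.sum_neg_distrib]
    apply Finset.sum_congr rfl
    intro A _
    rw [← Equiv.sum_comp (Equiv.mulLeft₀ (u ^ 3) (pow_ne_zero _ hu0)), ← Finset.sum_neg_distrib]
    apply Finset.sum_congr rfl
    intro B _
    rw [← hr.neg_pow]
    congr 1
    have eA : (Equiv.mulLeft₀ (u ^ 2) (pow_ne_zero _ hu0)) A = u ^ 2 * A := rfl
    have eB : (Equiv.mulLeft₀ (u ^ 3) (pow_ne_zero _ hu0)) B = u ^ 3 * B := rfl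
    rw [eA, eB]
    simp only [lamF, aF_twist u A B hu0, hu]
    simp [neg_div]
  linarith

theorem aF_sq_sum {p : ℕ} [hF : Fact p.Prime] (h5 : 5 ≤ p) :
    ∑ A : ZMod p, ∑ B : ZMod p, aF p A B ^ 2 = (p : ℤ) ^ 2 * (p - 1) := by
  classical
  have hch : ringChar (ZMod p) ≠ 2 := by rw [ZMod.ringChar_zmod_n]; omega
  set χ := quadraticChar (ZMod p) with hχ
  have h1 : ∀ x y : ZMod p, ∑ A : ZMod p, ∑ B : ZMod p, χ (x ^ 3 + A * x + B) * χ (y ^ 3 + A * y + B)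
      = if x = y then (p : ℤ) * (p - 1) else 0 := by
    intro x y
    have e : ∀ A : ZMod p, ∑ B : ZMod p, χ (x ^ 3 + A * x + B) * χ (y ^ 3 + A * y + B)
       = ∑ B : ZMod p, χ B * χ (B + (y ^ 3 - x ^ 3) + A * (y - x)) := by
      intro A
      rw [← Equiv.sum_comp (Equiv.subRight (x ^ 3 + A * x))]
      apply Finset.sum_congr rfl
      intro B _
      simp only [Equiv.subRight_apply]
      congr 2 <;> ring
    simp only [e]
    split_ifs with hxy
    · subst hxy
      simp only [sub_self, mul_zero, add_zero]
      have : ∑ B : ZMod p, χ B * χ B = p - 1 := by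
        have : ∀ B : ZMod p, χ B * χ B = 1 - (if B = 0 then 1 else 0) := by
          intro B
          split_ifs with h
          · rw [h, hχ, quadraticChar_zero]; norm_num
          · rw [← pow_two, hχ, quadraticChar_sq_one h]; norm_num
        simp [this]
      rw [this]
      simp only [Finset.sum_const, Finset.card_univ, ZMod.card, nsmul_eq_mul]
    · rw [Finset.sum_comm]
      apply Finset.sum_eq_zero
      intro B _
      rw [← Finset.mul_sum]
      have hne : y - x ≠ 0 := sub_ne_zero.2 (Ne.symm hxy)
      have : ∑ A : ZMod p, χ (B + (y ^ 3 - x ^ 3) + A * (y - x)) = ∑ A : ZMod p, χ A := by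
        conv_rhs => rw [← Equiv.sum_comp ((Equiv.mulRight₀ (y - x) hne).trans (Equiv.addLeft (B + (y ^ 3 - x ^ 3))))]
        apply Finset.sum_congr rfl
        intro A _
        simp [add_assoc]
      rw [this, hχ, quadraticChar_sum_zero hch, mul_zero]
  have h2 : ∀ A B : ZMod p, aF p A B ^ 2 = ∑ x : ZMod p, ∑ y : ZMod p, χ (x ^ 3 + A * x + B) * χ (y ^ 3 + A * y + B) := by
    intro A B
    rw [aF, neg_sq, pow_two, Finset.sum_mul_sum]
  calc ∑ A : ZMod p, ∑ B : ZMod p, aF p A B ^ 2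
      = ∑ A : ZMod p, ∑ x : ZMod p, ∑ y : ZMod p, ∑ B : ZMod p, χ (x ^ 3 + A * x + B) * χ (y ^ 3 + A * y + B) := by
        apply Finset.sum_congr rfl; intro A _
        simp only [h2]
        rw [Finset.sum_comm]
        apply Finset.sum_congr rfl; intro x _
        rw [Finset.sum_comm]
    _ = ∑ x : ZMod p, ∑ y : ZMod p, ∑ A : ZMod p, ∑ B : ZMod p, χ (x ^ 3 + A * x + B) * χ (y ^ 3 + A * y + B) := by
        rw [Finset.sum_comm]
        apply Finset.sum_congr rfl; intro x _
        rw [Finset.sum_comm]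
    _ = _ := by
        simp only [h1]
        simp
        ring

theorem lamF_sq_sum {p : ℕ} [hF : Fact p.Prime] (h5 : 5 ≤ p) :
    ∑ A : ZMod p, ∑ B : ZMod p, ((aF p A B : ℝ) / Real.sqrt p) ^ 2 = (p : ℝ) ^ 2 * (1 - 1 / p) := by
  have hp0 : (p : ℝ) ≠ 0 := by exact_mod_cast (by omega : p ≠ 0)
  have h := aF_sq_sum h5 (p := p)
  have h' : ∑ A : ZMod p, ∑ B : ZMod p, (aF p A B : ℝ) ^ 2 = (p : ℝ) ^ 2 * (p - 1) := by exact_mod_cast h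
  simp only [div_pow, Real.sq_sqrt (Nat.cast_nonneg p), ← Finset.sum_div]
  rw [h']; field_simp

theorem lamF_two_sum {p : ℕ} [hF : Fact p.Prime] (h5 : 5 ≤ p) :
    |∑ A : ZMod p, ∑ B : ZMod p, lamF p 2 A B| ≤ (p : ℝ) ^ 2 * (1 / p) := by
  classical
  have hpp : p.Prime := Fact.out
  have hp0 : (p : ℝ) ≠ 0 := by exact_mod_cast (by omega : p ≠ 0)
  have e : ∀ A B : ZMod p, lamF p 2 A B = ((aF p A B : ℝ) / Real.sqrt p) ^ 2 - 1
      + (if 4 * A ^ 3 + 27 * B ^ 2 = 0 then (1 : ℝ) else 0) := by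
    intro A B; simp only [lamF, if_true]; split_ifs <;> ring
  have hs : ∑ A : ZMod p, ∑ B : ZMod p, (if 4 * A ^ 3 + 27 * B ^ 2 = 0 then (1 : ℝ) else 0) ≤ p := by
    rw [← Fintype.sum_prod_type' (f := fun A B : ZMod p => (if 4 * A ^ 3 + 27 * B ^ 2 = 0 then (1 : ℝ) else 0))]
    rw [← Finset.sum_filter, Finset.sum_const, nsmul_eq_mul, mul_one]
    have hsub : (Finset.univ.filter fun P : ZMod p × ZMod p => 4 * P.1 ^ 3 + 27 * P.2 ^ 2 = 0)
       ⊆ Finset.univ.image (fun t : ZMod p => (-3 * t ^ 2, 2 * t ^ 3)) := by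
      rintro ⟨A, B⟩ h
      simp only [Finset.mem_filter, Finset.mem_univ, true_and] at h
      simp only [Finset.mem_image, Finset.mem_univ, true_and, Prod.mk.injEq]
      have h2 : (2 : ZMod p) ≠ 0 := by
        have : ((2 : ℕ) : ZMod p) ≠ 0 := by
          rw [Ne, ZMod.natCast_eq_zero_iff]; intro h; have := Nat.le_of_dvd (by norm_num) h; omega
        exact_mod_cast this
      have h3 : (3 : ZMod p) ≠ 0 := by
        have : ((3 : ℕ) : ZMod p) ≠ 0 := by
          rw [Ne, ZMod.natCast_eq_zero_iff]; intro h; have := Nat.le_of_dvd (by norm_num) h; omega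
        exact_mod_cast this
      by_cases hA : A = 0
      · have hB : B = 0 := by
          have : 3 ^ 3 * B ^ 2 = 0 := by rw [hA] at h; linear_combination h
          rcases mul_eq_zero.1 this with h | h
          · exact absurd h (pow_ne_zero _ h3)
          · exact pow_eq_zero_iff (by norm_num) |>.1 h
        exact ⟨0, by simp [hA], by simp [hB]⟩
      · refine ⟨-3 * B / (2 * A), ?_, ?_⟩
        · field_simp
          linear_combination -h
        · field_simp
          linear_combination (-B) * h
    have := (Finset.card_le_card hsub).trans Finset.card_image_le
    rw [Finset.card_univ, ZMod.card] at this
    exact_mod_cast this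
  have hs0 : 0 ≤ ∑ A : ZMod p, ∑ B : ZMod p, (if 4 * A ^ 3 + 27 * B ^ 2 = 0 then (1 : ℝ) else 0) := by
    apply Finset.sum_nonneg; intro A _; apply Finset.sum_nonneg; intro B _; split_ifs <;> norm_num
  have h1 := lamF_sq_sum h5 (p := p)
  have h2 : ∑ A : ZMod p, ∑ B : ZMod p, lamF p 2 A B = (p : ℝ) ^ 2 * (1 - 1 / p) - p ^ 2
      + ∑ A : ZMod p, ∑ B : ZMod p, (if 4 * A ^ 3 + 27 * B ^ 2 = 0 then (1 : ℝ) else 0) := by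
    simp only [e, Finset.sum_add_distrib, Finset.sum_sub_distrib, h1]
    simp [pow_two]
  have h3 : (p : ℝ) ^ 2 * (1 - 1 / p) - p ^ 2 = -p := by field_simp; ring
  have h4 : (p : ℝ) ^ 2 * (1 / p) = p := by field_simp
  rw [h2, h3, h4, abs_le]
  constructor <;> linarith

theorem sv_complete {P : ℕ} [NeZero P] (H : ZMod P → ℝ) (s : ℤ) :
    ∑ i ∈ Finset.range P, H ((s + i : ℤ) : ZMod P) = ∑ z : ZMod P, H z := by
  apply Finset.sum_bij (fun (i : ℕ) _ => ((s + i : ℤ) : ZMod P))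
  · intros; simp
  · intro i hi j hj h
    rw [Finset.mem_range] at hi hj
    push_cast at h
    have h2 := add_left_cancel h
    rw [ZMod.natCast_eq_natCast_iff'] at h2
    rwa [Nat.mod_eq_of_lt hi, Nat.mod_eq_of_lt hj] at h2
  · intro z _
    refine ⟨(z - (s : ZMod P)).val, Finset.mem_range.2 (ZMod.val_lt _), ?_⟩
    push_cast
    rw [ZMod.natCast_zmod_val]; ring
  · intros; rfl

theorem sv_mult {P : ℕ} [NeZero P] (H : ZMod P → ℝ) (s : ℤ) (q : ℕ) :
    ∑ i ∈ Finset.range (P * q), H ((s + i : ℤ) : ZMod P) = q * ∑ z : ZMod P, H z := by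
  induction q with
  | zero => simp
  | succ q ih =>
    rw [Nat.mul_succ, Finset.sum_range_add, ih]
    have := sv_complete H (s + (P * q : ℕ))
    have e : ∀ i ∈ Finset.range P, H ((s + ((P * q + i : ℕ) : ℤ) : ℤ) : ZMod P)
       = H ((s + (P * q : ℕ) + i : ℤ) : ZMod P) := by
      intro i _; push_cast; congr 1; ring
    rw [Finset.sum_congr rfl e, this]; push_cast; ring

theorem sv_range {P : ℕ} [NeZero P] (H : ZMod P → ℝ) (K : ℝ) (hK : ∀ z, |H z| ≤ K) (s : ℤ) (n : ℕ) :
    |∑ i ∈ Finset.range n, H ((s + i : ℤ) : ZMod P) - (n : ℝ) / P * ∑ z : ZMod P, H z| ≤ 2 * P * K := by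
  have hP : 0 < P := Nat.pos_of_ne_zero (NeZero.ne P)
  have hPR : (0 : ℝ) < P := by exact_mod_cast hP
  have hK0 : 0 ≤ K := (abs_nonneg _).trans (hK 0)
  set q := n / P
  set t := n % P
  have ht : t < P := Nat.mod_lt _ hP
  have hn : n = P * q + t := (Nat.div_add_mod n P).symm
  rw [hn, Finset.sum_range_add, sv_mult]
  have h1 : |∑ x ∈ Finset.range t, H ((s + ((P * q + x : ℕ) : ℤ) : ℤ) : ZMod P)| ≤ t * K := by
    refine (Finset.abs_sum_le_sum_abs _ _).trans ?_
    refine (Finset.sum_le_sum (fun i _ => hK _)).trans ?_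
    simp
  have h2 : |∑ z : ZMod P, H z| ≤ P * K := by
    refine (Finset.abs_sum_le_sum_abs _ _).trans ?_
    refine (Finset.sum_le_sum (fun i _ => hK _)).trans ?_
    simp [ZMod.card]
  have htR : (t : ℝ) ≤ P := by exact_mod_cast ht.le
  have e : (q : ℝ) * ∑ z : ZMod P, H z + ∑ x ∈ Finset.range t, H ((s + ((P * q + x : ℕ) : ℤ) : ℤ) : ZMod P)
      - ((P * q + t : ℕ) : ℝ) / P * ∑ z : ZMod P, H z
      = ∑ x ∈ Finset.range t, H ((s + ((P * q + x : ℕ) : ℤ) : ℤ) : ZMod P) - (t : ℝ) / P * ∑ z : ZMod P, H z := by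
    push_cast; field_simp; ring
  rw [e]
  refine (abs_sub _ _).trans ?_
  rw [abs_mul, abs_of_nonneg (by positivity : (0 : ℝ) ≤ t / P)]
  have h3 : (t : ℝ) / P * |∑ z : ZMod P, H z| ≤ t / P * (P * K) := by gcongr
  have h4 : (t : ℝ) / P * (P * K) = t * K := by field_simp
  have h5 : (t : ℝ) * K ≤ P * K := by gcongr
  linarith

theorem sv_Icc {P : ℕ} [NeZero P] (H : ZMod P → ℝ) (K : ℝ) (hK : ∀ z, |H z| ≤ K) (N : ℕ) :
    |∑ b ∈ Finset.Icc (-(N : ℤ)) N, H ((b : ℤ) : ZMod P) - (2 * N + 1 : ℝ) / P * ∑ z : ZMod P, H z| ≤ 2 * P * K := by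
  have := sv_range H K hK (-(N : ℤ)) (2 * N + 1)
  have e : ∑ b ∈ Finset.Icc (-(N : ℤ)) N, H ((b : ℤ) : ZMod P) =
      ∑ i ∈ Finset.range (2 * N + 1), H (((-(N : ℤ)) + i : ℤ) : ZMod P) := by
    symm
    apply Finset.sum_bij (fun (i : ℕ) _ => (-(N : ℤ)) + (i : ℤ))
    · intro i hi; rw [Finset.mem_range] at hi; rw [Finset.mem_Icc]; omega
    · intro i _ j _ h; omega
    · intro b hb; rw [Finset.mem_Icc] at hb
      exact ⟨(b + N).toNat, by rw [Finset.mem_range]; omega, by omega⟩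
    · intros; rfl
  rw [e]
  push_cast at this ⊢
  exact this

theorem sv_box {P : ℕ} [NeZero P] (G : ZMod P → ZMod P → ℝ) (K m : ℝ) (hK : ∀ a b, |G a b| ≤ K)
    (hm : |∑ a, ∑ b, G a b| ≤ (P : ℝ) ^ 2 * m) (M N : ℕ) :
    |∑ A ∈ Finset.Icc (-(M : ℤ)) M, ∑ B ∈ Finset.Icc (-(N : ℤ)) N, G (A : ZMod P) (B : ZMod P)|
      ≤ m * ((2 * M + 1) * (2 * N + 1)) + 2 * P * K * ((2 * M + 1) + (2 * N + 1)) := by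
  have hP : 0 < P := Nat.pos_of_ne_zero (NeZero.ne P)
  have hPR : (0 : ℝ) < P := by exact_mod_cast hP
  have h1 : ∀ a : ZMod P, |∑ B ∈ Finset.Icc (-(N : ℤ)) N, G a (B : ZMod P) - (2 * N + 1 : ℝ) / P * ∑ b, G a b| ≤ 2 * P * K :=
    fun a => sv_Icc (G a) K (hK a) N
  have h2 := sv_Icc (fun a => ∑ b, G a b) (P * K) (fun a => by
    refine (Finset.abs_sum_le_sum_abs _ _).trans ?_
    refine (Finset.sum_le_sum (fun i _ => hK _ _)).trans ?_
    simp [ZMod.card]) M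
  have h3 : |∑ A ∈ Finset.Icc (-(M : ℤ)) M, (∑ B ∈ Finset.Icc (-(N : ℤ)) N, G (A : ZMod P) (B : ZMod P)
      - (2 * N + 1 : ℝ) / P * ∑ b, G (A : ZMod P) b)| ≤ (2 * M + 1) * (2 * P * K) := by
    refine (Finset.abs_sum_le_sum_abs _ _).trans ?_
    refine (Finset.sum_le_sum (fun i _ => h1 _)).trans ?_
    rw [Finset.sum_const, Int.card_Icc, nsmul_eq_mul]
    have : ((M : ℤ) + 1 - -(M : ℤ)).toNat = 2 * M + 1 := by omega
    rw [this]; push_cast; exact le_refl _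
  rw [Finset.sum_sub_distrib, ← Finset.mul_sum] at h3
  set S := ∑ A ∈ Finset.Icc (-(M : ℤ)) M, ∑ B ∈ Finset.Icc (-(N : ℤ)) N, G (A : ZMod P) (B : ZMod P)
  set T := ∑ A ∈ Finset.Icc (-(M : ℤ)) M, ∑ b, G (A : ZMod P) b
  set W := ∑ a, ∑ b, G a b
  have h4 : |(2 * N + 1 : ℝ) / P * T - (2 * N + 1 : ℝ) / P * ((2 * M + 1 : ℝ) / P * W)| ≤ (2 * N + 1) * (2 * P * K) := by
    rw [← mul_sub, abs_mul, abs_of_nonneg (by positivity : (0 : ℝ) ≤ (2 * N + 1 : ℝ) / P)]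
    calc (2 * N + 1 : ℝ) / P * |T - (2 * M + 1 : ℝ) / P * W| ≤ (2 * N + 1 : ℝ) / P * (2 * P * (P * K)) := by gcongr
      _ = _ := by field_simp
  have h5 : |(2 * N + 1 : ℝ) / P * ((2 * M + 1 : ℝ) / P * W)| ≤ m * ((2 * M + 1) * (2 * N + 1)) := by
    rw [abs_mul, abs_mul, abs_of_nonneg (by positivity : (0 : ℝ) ≤ (2 * N + 1 : ℝ) / P), abs_of_nonneg (by positivity : (0 : ℝ) ≤ (2 * M + 1 : ℝ) / P)]
    calc (2 * N + 1 : ℝ) / P * ((2 * M + 1 : ℝ) / P * |W|) ≤ (2 * N + 1 : ℝ) / P * ((2 * M + 1 : ℝ) / P * (P ^ 2 * m)) := by gcongr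
      _ = _ := by field_simp
  rw [abs_le] at *
  constructor <;> linarith [h3.1, h3.2, h4.1, h4.2, h5.1, h5.2]

theorem sv_sq_sum (n : ℕ) : ∑ d ∈ Finset.Icc 1 n, 1 / (d : ℝ) ^ 2 ≤ 2 - 1 / (n : ℝ) := by
  induction n with
  | zero => simp
  | succ n ih =>
    rw [Finset.sum_Icc_succ_top (by omega)]
    rcases Nat.eq_zero_or_pos n with h | h
    · subst h; norm_num
    · have hn : (0 : ℝ) < n := by exact_mod_cast h
      have : 1 / ((n + 1 : ℕ) : ℝ) ^ 2 ≤ 1 / n - 1 / ((n + 1 : ℕ) : ℝ) := by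
        push_cast
        rw [div_sub_div _ _ hn.ne' (by positivity), div_le_div_iff₀ (by positivity) (by positivity)]
        nlinarith
      linarith

theorem sv_dvd_sum (h : ℤ → ℝ) (t M : ℕ) (ht : 0 < t) :
    ∑ A ∈ Finset.Icc (-(M : ℤ)) M with (t : ℤ) ∣ A, h A
      = ∑ A ∈ Finset.Icc (-((M / t : ℕ) : ℤ)) (M / t : ℕ), h (t * A) := by
  symm
  apply Finset.sum_bij (fun A _ => (t : ℤ) * A)
  · intro A hA
    rw [Finset.mem_Icc] at hA
    rw [Finset.mem_filter, Finset.mem_Icc]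
    have h1 : t * (M / t) ≤ M := Nat.mul_div_le M t
    have h1' : (t : ℤ) * ((M / t : ℕ) : ℤ) ≤ M := by exact_mod_cast h1
    have ht' : (0 : ℤ) < t := by exact_mod_cast ht
    refine ⟨⟨?_, ?_⟩, Dvd.intro _ rfl⟩
    · nlinarith
    · nlinarith
  · intro a _ b _ hab
    exact mul_left_cancel₀ (by exact_mod_cast ht.ne') hab
  · intro A hA
    rw [Finset.mem_filter, Finset.mem_Icc] at hA
    obtain ⟨⟨h1, h2⟩, c, rfl⟩ := hA
    refine ⟨c, ?_, rfl⟩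
    have : c.natAbs ≤ M / t := by
      rw [Nat.le_div_iff_mul_le ht]
      have : (t * c : ℤ).natAbs ≤ M := by omega
      rwa [Int.natAbs_mul, Int.natAbs_natCast, mul_comm] at this
    rw [Finset.mem_Icc]; omega
  · intros; rfl

theorem sv_moebius (A B : ℤ) (T : Finset ℕ)
    (hT : ∀ d : ℕ, d ∈ T ↔ (d : ℤ) ^ 4 ∣ A ∧ (d : ℤ) ^ 6 ∣ B) (h0 : 0 ∉ T) [Decidable (CondM A B)] :
    ∑ d ∈ T, ArithmeticFunction.moebius d = if CondM A B then 1 else 0 := by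
  have hT' : ∀ d : ℕ, d ∈ T ↔ d ^ 4 ∣ A.natAbs ∧ d ^ 6 ∣ B.natAbs := by
    intro d
    rw [hT, ← Int.natCast_dvd, ← Int.natCast_dvd]; push_cast; rfl
  have hlcm : ∀ d ∈ T, ∀ e ∈ T, Nat.lcm d e ∈ T := by
    intro d hd e he
    rw [hT'] at *
    rw [← Nat.pow_lcm_pow, ← Nat.pow_lcm_pow]
    exact ⟨Nat.lcm_dvd hd.1 he.1, Nat.lcm_dvd hd.2 he.2⟩
  have h1 : 1 ∈ T := by rw [hT']; simp
  obtain ⟨L, hL, hmax⟩ := T.exists_max_image id ⟨1, h1⟩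
  simp only [id] at hmax
  have hL0 : L ≠ 0 := fun h => h0 (h ▸ hL)
  have hdv : T = L.divisors := by
    ext d
    rw [Nat.mem_divisors]
    constructor
    · intro hd
      refine ⟨?_, hL0⟩
      have h2 := hmax _ (hlcm d hd L hL)
      have h3 : Nat.lcm d L = L := by
        apply le_antisymm h2
        refine Nat.le_of_dvd (Nat.pos_of_ne_zero fun h => h0 (h ▸ hlcm d hd L hL)) (Nat.dvd_lcm_right _ _)
      rw [← h3]; exact Nat.dvd_lcm_left _ _
    · rintro ⟨hd, _⟩
      rw [hT'] at *
      exact ⟨(pow_dvd_pow_of_dvd hd 4).trans hL.1, (pow_dvd_pow_of_dvd hd 6).trans hL.2⟩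
  rw [hdv, ← ArithmeticFunction.coe_mul_zeta_apply, ArithmeticFunction.moebius_mul_coe_zeta, ArithmeticFunction.one_apply]
  have : L = 1 ↔ CondM A B := by
    constructor
    · rintro rfl q hq hA hB
      have : q ∈ T := (hT q).2 ⟨hA, hB⟩
      rw [hdv] at this
      simp at this
      exact hq.one_lt.ne' this
    · intro h
      by_contra hne
      obtain ⟨q, hq, hqL⟩ := Nat.exists_prime_and_dvd hne
      have : q ∈ T := by rw [hdv, Nat.mem_divisors]; exact ⟨hqL, hL0⟩
      rw [hT] at this
      exact h q hq this.1 this.2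
  simp only [this]

/-- the floors cutting out the box of height `X` -/
theorem sv_floor (X : ℝ) (hX : 2 ≤ X) : ∃ M N : ℕ, ∃ x : ℝ, 1 ≤ x ∧ (M : ℝ) ≤ x ^ 4 ∧ (N : ℝ) ≤ x ^ 6 ∧
    x ^ 6 = X ^ ((1 : ℝ) / 2) ∧ x ^ 10 = X ^ ((5 : ℝ) / 6) ∧ x ^ 4 = X ^ ((1 : ℝ) / 3) ∧
    ∀ A B : ℤ, (((max (|A| ^ 3) (B ^ 2) : ℤ) : ℝ) ≤ X ↔
      A ∈ Finset.Icc (-(M : ℤ)) M ∧ B ∈ Finset.Icc (-(N : ℤ)) N) := by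
  have hX0 : 0 ≤ X := by linarith
  set x := X ^ ((1 : ℝ) / 12) with hx
  have hxn : ∀ n : ℕ, x ^ n = X ^ ((n : ℝ) / 12) := by
    intro n; rw [hx, ← Real.rpow_natCast, ← Real.rpow_mul hX0]; congr 1; ring
  have hx12 : x ^ 12 = X := by rw [hxn]; norm_num
  have hx1 : 1 ≤ x := Real.one_le_rpow (by linarith) (by norm_num)
  refine ⟨⌊x ^ 4⌋₊, ⌊x ^ 6⌋₊, x, hx1, Nat.floor_le (by positivity), Nat.floor_le (by positivity),
    by rw [hxn]; norm_num, by rw [hxn]; norm_num, by rw [hxn]; norm_num, ?_⟩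
  intro A B
  have e1 : ((|A| ^ 3 : ℤ) : ℝ) ≤ X ↔ A ∈ Finset.Icc (-((⌊x ^ 4⌋₊ : ℕ) : ℤ)) (⌊x ^ 4⌋₊ : ℕ) := by
    have : ((|A| ^ 3 : ℤ) : ℝ) = (A.natAbs : ℝ) ^ 3 := by
      rw [Nat.cast_natAbs]; push_cast; rfl
    rw [this, ← hx12, show x ^ 12 = (x ^ 4) ^ 3 by ring, pow_le_pow_iff_left₀ (by positivity) (by positivity) (by norm_num),
      ← Nat.le_floor_iff (by positivity), Finset.mem_Icc]
    omega
  have e2 : ((B ^ 2 : ℤ) : ℝ) ≤ X ↔ B ∈ Finset.Icc (-((⌊x ^ 6⌋₊ : ℕ) : ℤ)) (⌊x ^ 6⌋₊ : ℕ) := by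
    have : ((B ^ 2 : ℤ) : ℝ) = (B.natAbs : ℝ) ^ 2 := by
      rw [Nat.cast_natAbs]; push_cast; rw [sq_abs]
    rw [this, ← hx12, show x ^ 12 = (x ^ 6) ^ 2 by ring, pow_le_pow_iff_left₀ (by positivity) (by positivity) (by norm_num),
      ← Nat.le_floor_iff (by positivity), Finset.mem_Icc]
    omega
  rw [Int.cast_max, max_le_iff, e1, e2]

open Classical in
theorem sv_Efam (X : ℝ) (M N : ℕ) (h : ∀ A B : ℤ, (((max (|A| ^ 3) (B ^ 2) : ℤ) : ℝ) ≤ X ↔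
      A ∈ Finset.Icc (-(M : ℤ)) M ∧ B ∈ Finset.Icc (-(N : ℤ)) N)) :
    Efam X = (((Finset.Icc (-(M : ℤ)) M ×ˢ Finset.Icc (-(N : ℤ)) N).filter
      (fun AB => CondM AB.1 AB.2 ∧ 4 * AB.1 ^ 3 + 27 * AB.2 ^ 2 ≠ 0) : Finset (ℤ × ℤ)) : Set (ℤ × ℤ)) := by
  ext ⟨A, B⟩
  simp only [Efam, Set.mem_ofPred_eq, h, Finset.coe_filter, Finset.mem_product]
  tauto

theorem sv_disc (M N : ℕ) : ((Finset.Icc (-(M : ℤ)) M ×ˢ Finset.Icc (-(N : ℤ)) N).filter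
      (fun AB => 4 * AB.1 ^ 3 + 27 * AB.2 ^ 2 = 0)).card ≤ 2 * N + 1 := by
  have : (Finset.Icc (-(N : ℤ)) N).card = 2 * N + 1 := by rw [Int.card_Icc]; omega
  rw [← this]
  apply Finset.card_le_card_of_injOn (fun AB => AB.2)
  · intro AB h
    simp only [Finset.coe_filter, Finset.mem_product, Set.mem_ofPred_eq] at h
    exact h.1.2
  · rintro ⟨A, B⟩ h ⟨A', B'⟩ h' e
    simp only [Finset.coe_filter, Finset.mem_product, Set.mem_ofPred_eq] at h h' e
    subst e
    have : A ^ 3 = A' ^ 3 := by linarith [h.2, h'.2]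
    have := (Odd.strictMono_pow (R := ℤ) (by decide : Odd 3)).injective this
    rw [this]

open Classical in
theorem sv_main {P : ℕ} [NeZero P] (G : ZMod P → ZMod P → ℝ) (K m : ℝ) (hK : ∀ a b, |G a b| ≤ K) (hm0 : 0 ≤ m)
    (hm : |∑ a, ∑ b, G a b| ≤ (P : ℝ) ^ 2 * m) (hG0 : G 0 0 = 0)
    (hcop : ∀ d : ℕ, d.Coprime P → ∀ a b, G ((d : ZMod P) ^ 4 * a) ((d : ZMod P) ^ 6 * b) = G a b)
    (hncop : ∀ d : ℕ, ¬ d.Coprime P → ∀ a b, G ((d : ZMod P) ^ 4 * a) ((d : ZMod P) ^ 6 * b) = 0)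
    (X : ℝ) (hX : 2 ≤ X) :
    |∑ᶠ AB ∈ Efam X, G (AB.1 : ZMod P) (AB.2 : ZMod P)|
      ≤ 27 * (K * P * X ^ ((1 : ℝ) / 2) + m * X ^ ((5 : ℝ) / 6)) := by
  obtain ⟨M, N, x, hx1, hM, hN, hx6, hx10, -, hbox⟩ := sv_floor X hX
  have hP : 0 < P := Nat.pos_of_ne_zero (NeZero.ne P)
  have hPR : (1 : ℝ) ≤ P := by exact_mod_cast hP
  have hK0 : 0 ≤ K := (abs_nonneg _).trans (hK 0 0)
  rw [sv_Efam X M N hbox, finsum_mem_coe_finset, ← hx6, ← hx10, ← Finset.filter_filter]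
  set Bx := Finset.Icc (-(M : ℤ)) M ×ˢ Finset.Icc (-(N : ℤ)) N with hBx
  set g : ℤ × ℤ → ℝ := fun AB => G (AB.1 : ZMod P) (AB.2 : ZMod P) with hg
  have hsplit := Finset.sum_filter_add_sum_filter_not (Bx.filter fun AB => CondM AB.1 AB.2)
    (fun AB => 4 * AB.1 ^ 3 + 27 * AB.2 ^ 2 ≠ 0) g
  have hdisc : |∑ AB ∈ (Bx.filter fun AB => CondM AB.1 AB.2) with ¬ (4 * AB.1 ^ 3 + 27 * AB.2 ^ 2 ≠ 0), g AB| ≤ 3 * x ^ 6 * K := by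
    refine (Finset.abs_sum_le_sum_abs _ _).trans ?_
    refine (Finset.sum_le_sum (fun i _ => hK _ _)).trans ?_
    rw [Finset.sum_const, nsmul_eq_mul]
    apply mul_le_mul_of_nonneg_right _ hK0
    have h1 : ((Bx.filter fun AB => CondM AB.1 AB.2).filter (fun AB => ¬ (4 * AB.1 ^ 3 + 27 * AB.2 ^ 2 ≠ 0))).card ≤ 2 * N + 1 := by
      refine le_trans (Finset.card_le_card ?_) (sv_disc M N)
      intro AB h
      simp only [Finset.mem_filter, not_not] at h ⊢
      exact ⟨h.1.1, h.2⟩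
    have h1' : (((Bx.filter fun AB => CondM AB.1 AB.2).filter (fun AB => ¬ (4 * AB.1 ^ 3 + 27 * AB.2 ^ 2 ≠ 0))).card : ℝ) ≤ 2 * N + 1 := by
      exact_mod_cast h1
    have : 1 ≤ x ^ 6 := one_le_pow₀ hx1
    linarith
  set D := (Finset.Icc 1 (M + N)).filter (fun d => d ^ 4 ≤ M ∨ d ^ 6 ≤ N) with hD
  have hDx : ∀ d ∈ D, 1 ≤ d ∧ (d : ℝ) ≤ x := by
    intro d hd
    rw [hD, Finset.mem_filter, Finset.mem_Icc] at hd
    refine ⟨hd.1.1, ?_⟩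
    rcases hd.2 with h | h
    · have : (d : ℝ) ^ 4 ≤ x ^ 4 := le_trans (by exact_mod_cast h) hM
      exact (pow_le_pow_iff_left₀ (by positivity) (by positivity) (by norm_num)).1 this
    · have : (d : ℝ) ^ 6 ≤ x ^ 6 := le_trans (by exact_mod_cast h) hN
      exact (pow_le_pow_iff_left₀ (by positivity) (by positivity) (by norm_num)).1 this
  have hpt : ∀ AB ∈ Bx, (if CondM AB.1 AB.2 then g AB else 0) =
      ∑ d ∈ D, (ArithmeticFunction.moebius d : ℝ) * (if (d : ℤ) ^ 4 ∣ AB.1 ∧ (d : ℤ) ^ 6 ∣ AB.2 then g AB else 0) := by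
    rintro ⟨A, B⟩ hAB
    by_cases hz : A = 0 ∧ B = 0
    · obtain ⟨rfl, rfl⟩ := hz
      have : g (0, 0) = 0 := by simp [hg, hG0]
      simp [this]
    · have hmob := sv_moebius A B (D.filter fun d : ℕ => (d : ℤ) ^ 4 ∣ A ∧ (d : ℤ) ^ 6 ∣ B) (by
        intro d
        rw [Finset.mem_filter, and_iff_right_iff_imp]
        rintro ⟨hA, hB⟩
        rw [hBx, Finset.mem_product, Finset.mem_Icc, Finset.mem_Icc] at hAB
        simp only at hAB
        have hd0 : d ≠ 0 := by
          rintro rfl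
          apply hz
          simpa using And.intro hA hB
        have hA' : d ^ 4 ∣ A.natAbs := by rw [← Int.natCast_dvd]; exact_mod_cast hA
        have hB' : d ^ 6 ∣ B.natAbs := by rw [← Int.natCast_dvd]; exact_mod_cast hB
        rw [hD, Finset.mem_filter, Finset.mem_Icc]
        have l4 : d ≤ d ^ 4 := Nat.le_self_pow (by norm_num) d
        have l6 : d ≤ d ^ 6 := Nat.le_self_pow (by norm_num) d
        by_cases hA0 : A = 0
        · have hB0 : B ≠ 0 := fun h => hz ⟨hA0, h⟩
          have := Nat.le_of_dvd (Int.natAbs_pos.2 hB0) hB'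
          have : d ^ 6 ≤ N := by omega
          exact ⟨⟨by omega, by omega⟩, Or.inr this⟩
        · have := Nat.le_of_dvd (Int.natAbs_pos.2 hA0) hA'
          have : d ^ 4 ≤ M := by omega
          exact ⟨⟨by omega, by omega⟩, Or.inl this⟩) (by simp [hD])
      have hmob' := congrArg (fun z : ℤ => (z : ℝ) * g (A, B)) hmob
      push_cast at hmob'
      rw [Finset.sum_mul, Finset.sum_filter] at hmob'
      simp only [ite_mul, one_mul, zero_mul] at hmob'
      simp only [mul_ite, mul_zero]
      exact hmob'.symm
  have hS : ∑ AB ∈ Bx.filter (fun AB => CondM AB.1 AB.2), g AB = ∑ d ∈ D, (ArithmeticFunction.moebius d : ℝ) *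
      ∑ AB ∈ Bx, (if (d : ℤ) ^ 4 ∣ AB.1 ∧ (d : ℤ) ^ 6 ∣ AB.2 then g AB else 0) := by
    rw [Finset.sum_filter, Finset.sum_congr rfl hpt, Finset.sum_comm]
    apply Finset.sum_congr rfl; intro d _
    rw [Finset.mul_sum]
  have hinner : ∀ d ∈ D, |∑ AB ∈ Bx, (if (d : ℤ) ^ 4 ∣ AB.1 ∧ (d : ℤ) ^ 6 ∣ AB.2 then g AB else 0)|
      ≤ (9 * m * x ^ 10 + 12 * P * K * x ^ 6) * (1 / (d : ℝ) ^ 2) := by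
    intro d hd
    obtain ⟨hd1, hdx⟩ := hDx d hd
    have hd1R : (1 : ℝ) ≤ d := by exact_mod_cast hd1
    have e : ∑ AB ∈ Bx, (if (d : ℤ) ^ 4 ∣ AB.1 ∧ (d : ℤ) ^ 6 ∣ AB.2 then g AB else 0)
        = ∑ A ∈ Finset.Icc (-((M / d ^ 4 : ℕ) : ℤ)) (M / d ^ 4 : ℕ), ∑ B ∈ Finset.Icc (-((N / d ^ 6 : ℕ) : ℤ)) (N / d ^ 6 : ℕ),
          G ((d : ZMod P) ^ 4 * (A : ZMod P)) ((d : ZMod P) ^ 6 * (B : ZMod P)) := by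
      rw [hBx, Finset.sum_product]
      have e1 : ∀ A : ℤ, ∑ B ∈ Finset.Icc (-(N : ℤ)) N, (if (d : ℤ) ^ 4 ∣ A ∧ (d : ℤ) ^ 6 ∣ B then g (A, B) else 0)
         = if ((d ^ 4 : ℕ) : ℤ) ∣ A then ∑ B ∈ Finset.Icc (-((N / d ^ 6 : ℕ) : ℤ)) (N / d ^ 6 : ℕ), g (A, ((d ^ 6 : ℕ) : ℤ) * B) else 0 := by
        intro A
        rw [← sv_dvd_sum (fun B => g (A, B)) (d ^ 6) N (by positivity), Finset.sum_filter]
        push_cast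
        split_ifs with h
        · simp [h]
        · simp [h]
      simp only [e1]
      rw [← Finset.sum_filter, sv_dvd_sum (fun A => ∑ B ∈ Finset.Icc (-((N / d ^ 6 : ℕ) : ℤ)) (N / d ^ 6 : ℕ), g (A, ((d ^ 6 : ℕ) : ℤ) * B)) (d ^ 4) M (by positivity)]
      apply Finset.sum_congr rfl; intro A _
      apply Finset.sum_congr rfl; intro B _
      simp [hg]
    rw [e]
    by_cases hc : d.Coprime P
    · simp only [hcop d hc]
      refine (sv_box G K m hK hm _ _).trans ?_
      set y := x / d with hy
      have hy1 : 1 ≤ y := by rw [hy, le_div_iff₀ (by linarith)]; linarith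
      have hM' : ((M / d ^ 4 : ℕ) : ℝ) ≤ y ^ 4 := by
        refine Nat.cast_div_le.trans ?_
        rw [hy, div_pow]; push_cast; gcongr
      have hN' : ((N / d ^ 6 : ℕ) : ℝ) ≤ y ^ 6 := by
        refine Nat.cast_div_le.trans ?_
        rw [hy, div_pow]; push_cast; gcongr
      have y4 : 1 ≤ y ^ 4 := one_le_pow₀ hy1
      have y6 : 1 ≤ y ^ 6 := one_le_pow₀ hy1
      have y46 : y ^ 4 ≤ y ^ 6 := pow_le_pow_right₀ hy1 (by norm_num)
      have a1 : 2 * ((M / d ^ 4 : ℕ) : ℝ) + 1 ≤ 3 * y ^ 4 := by linarith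
      have a2 : 2 * ((N / d ^ 6 : ℕ) : ℝ) + 1 ≤ 3 * y ^ 6 := by linarith
      have a3 : (2 * ((M / d ^ 4 : ℕ) : ℝ) + 1) * (2 * ((N / d ^ 6 : ℕ) : ℝ) + 1) ≤ 3 * y ^ 4 * (3 * y ^ 6) := by gcongr
      have a4 : 3 * y ^ 4 * (3 * y ^ 6) = 9 * y ^ 10 := by ring
      have b : ∀ n : ℕ, 2 ≤ n → y ^ n ≤ x ^ n * (1 / (d : ℝ) ^ 2) := by
        intro n hn
        rw [hy, div_pow, div_eq_mul_one_div]
        gcongr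
      have b10 := b 10 (by norm_num)
      have b6 := b 6 (by norm_num)
      calc _ ≤ m * (9 * y ^ 10) + 2 * P * K * (6 * y ^ 6) := by
            rw [← a4]
            gcongr
            linarith
        _ ≤ m * (9 * (x ^ 10 * (1 / (d : ℝ) ^ 2))) + 2 * P * K * (6 * (x ^ 6 * (1 / (d : ℝ) ^ 2))) := by gcongr
        _ = _ := by ring
    · simp only [hncop d hc]
      simp only [Finset.sum_const_zero, abs_zero]
      positivity
  have hS2 : |∑ AB ∈ Bx.filter (fun AB => CondM AB.1 AB.2), g AB| ≤ (9 * m * x ^ 10 + 12 * P * K * x ^ 6) * 2 := by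
    rw [hS]
    refine (Finset.abs_sum_le_sum_abs _ _).trans ?_
    have : ∀ d ∈ D, |(ArithmeticFunction.moebius d : ℝ) * ∑ AB ∈ Bx, (if (d : ℤ) ^ 4 ∣ AB.1 ∧ (d : ℤ) ^ 6 ∣ AB.2 then g AB else 0)|
        ≤ (9 * m * x ^ 10 + 12 * P * K * x ^ 6) * (1 / (d : ℝ) ^ 2) := by
      intro d hd
      rw [abs_mul]
      have h1 : |(ArithmeticFunction.moebius d : ℝ)| ≤ 1 := by
        exact_mod_cast ArithmeticFunction.abs_moebius_le_one
      calc _ ≤ 1 * _ := mul_le_mul_of_nonneg_right h1 (abs_nonneg _)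
        _ ≤ _ := by rw [one_mul]; exact hinner d hd
    refine (Finset.sum_le_sum this).trans ?_
    rw [← Finset.mul_sum]
    gcongr
    refine (Finset.sum_le_sum_of_subset_of_nonneg (Finset.filter_subset _ _) (fun _ _ _ => by positivity)).trans ?_
    refine (sv_sq_sum (M + N)).trans ?_
    have : (0 : ℝ) ≤ 1 / ((M + N : ℕ) : ℝ) := by positivity
    linarith
  have hfin : |∑ AB ∈ (Bx.filter fun AB => CondM AB.1 AB.2) with 4 * AB.1 ^ 3 + 27 * AB.2 ^ 2 ≠ 0, g AB|
      ≤ (9 * m * x ^ 10 + 12 * P * K * x ^ 6) * 2 + 3 * x ^ 6 * K := by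
    rw [eq_sub_of_add_eq hsplit]
    exact (abs_sub _ _).trans (add_le_add hS2 hdisc)
  refine hfin.trans ?_
  have q1 : x ^ 6 * K ≤ K * P * x ^ 6 := by
    have : 0 ≤ x ^ 6 * K := by positivity
    nlinarith
  have q2 : 0 ≤ m * x ^ 10 := by positivity
  nlinarith

noncomputable def fG {k : ℕ} (p : Fin k → ℕ) (f : ∀ i, ZMod (p i) → ZMod (p i) → ℝ)
    (a b : ZMod (∏ i, p i)) : ℝ :=
  ∏ i, f i (ZMod.castHom (Finset.dvd_prod_of_mem p (Finset.mem_univ i)) (ZMod (p i)) a)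
    (ZMod.castHom (Finset.dvd_prod_of_mem p (Finset.mem_univ i)) (ZMod (p i)) b)

theorem fG_int {k : ℕ} (p : Fin k → ℕ) (f : ∀ i, ZMod (p i) → ZMod (p i) → ℝ) (A B : ℤ) :
    fG p f (A : ZMod (∏ i, p i)) (B : ZMod (∏ i, p i)) = ∏ i, f i (A : ZMod (p i)) (B : ZMod (p i)) := by
  unfold fG
  simp only [map_intCast]

theorem fG_sum {k : ℕ} (p : Fin k → ℕ) [∀ i, NeZero (p i)] [NeZero (∏ i, p i)]
    (hc : Pairwise (Function.onFun Nat.Coprime p))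
    (f : ∀ i, ZMod (p i) → ZMod (p i) → ℝ) :
    ∑ a, ∑ b, fG p f a b = ∏ i, ∑ a, ∑ b, f i a b := by
  have h1 : ∀ i, ∑ a, ∑ b, f i a b = ∑ ab : ZMod (p i) × ZMod (p i), f i ab.1 ab.2 := fun i =>
    (Fintype.sum_prod_type (fun ab : ZMod (p i) × ZMod (p i) => f i ab.1 ab.2)).symm
  simp only [h1]
  rw [Finset.prod_univ_sum, Fintype.piFinset_univ,
    ← Fintype.sum_prod_type (fun ab : ZMod (∏ i, p i) × ZMod (∏ i, p i) => fG p f ab.1 ab.2)]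
  let E := ZMod.prodEquivPi p hc
  apply Fintype.sum_equiv ((Equiv.prodCongr E.toEquiv E.toEquiv).trans
    (Equiv.arrowProdEquivProdArrow _ _ _).symm)
  rintro ⟨a, b⟩
  unfold fG
  apply Finset.prod_congr rfl
  intro i _
  rw [← ZMod.prodEquivPi_apply p hc, ← ZMod.prodEquivPi_apply p hc]
  rfl

theorem fG_zero {k : ℕ} (hk : 1 ≤ k) (p : Fin k → ℕ) (f : ∀ i, ZMod (p i) → ZMod (p i) → ℝ)
    (h0 : ∀ i, f i 0 0 = 0) : fG p f 0 0 = 0 := by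
  unfold fG
  apply Finset.prod_eq_zero (Finset.mem_univ ⟨0, hk⟩)
  simp [h0]

theorem fG_cop {k : ℕ} (p : Fin k → ℕ) (hp : ∀ i, (p i).Prime) (f : ∀ i, ZMod (p i) → ZMod (p i) → ℝ)
    (hs : ∀ i (d a b : ZMod (p i)), d ≠ 0 → f i (d ^ 4 * a) (d ^ 6 * b) = f i a b)
    (d : ℕ) (hd : d.Coprime (∏ i, p i)) (a b : ZMod (∏ i, p i)) :
    fG p f ((d : ZMod (∏ i, p i)) ^ 4 * a) ((d : ZMod (∏ i, p i)) ^ 6 * b) = fG p f a b := by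
  unfold fG
  apply Finset.prod_congr rfl
  intro i _
  simp only [map_mul, map_pow, map_natCast]
  apply hs
  intro h
  rw [ZMod.natCast_eq_zero_iff] at h
  have := Nat.dvd_gcd h (Finset.dvd_prod_of_mem p (Finset.mem_univ i))
  rw [hd] at this
  exact (hp i).one_lt.ne' (Nat.dvd_one.1 this)

theorem fG_ncop {k : ℕ} (p : Fin k → ℕ) (hp : ∀ i, (p i).Prime) (f : ∀ i, ZMod (p i) → ZMod (p i) → ℝ)
    (h0 : ∀ i, f i 0 0 = 0)
    (d : ℕ) (hd : ¬ d.Coprime (∏ i, p i)) (a b : ZMod (∏ i, p i)) :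
    fG p f ((d : ZMod (∏ i, p i)) ^ 4 * a) ((d : ZMod (∏ i, p i)) ^ 6 * b) = 0 := by
  have : ∃ i, ¬ d.Coprime (p i) := by
    by_contra h
    push Not at h
    exact hd (Nat.Coprime.prod_right (fun i _ => h i))
  obtain ⟨i, hi⟩ := this
  have hdi : p i ∣ d := by
    by_contra h
    exact hi (((hp i).coprime_iff_not_dvd.2 h).symm)
  unfold fG
  apply Finset.prod_eq_zero (Finset.mem_univ i)
  simp only [map_mul, map_pow, map_natCast]
  rw [(ZMod.natCast_eq_zero_iff d (p i)).2 hdi]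
  simp [h0]

theorem fG_bound {k : ℕ} (p : Fin k → ℕ) (f : ∀ i, ZMod (p i) → ZMod (p i) → ℝ) (K : Fin k → ℝ)
    (h : ∀ i a b, |f i a b| ≤ K i) (a b : ZMod (∏ i, p i)) : |fG p f a b| ≤ ∏ i, K i := by
  unfold fG
  rw [Finset.abs_prod]
  exact Finset.prod_le_prod (fun _ _ => abs_nonneg _) (fun i _ => h i _ _)

theorem fin_prod {ι : Type*} (s : Finset ι) (u t : ι → ℝ) (h0 : ∀ i ∈ s, 0 ≤ u i) (h1 : ∀ i ∈ s, u i ≤ 1)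
    (ht : ∀ i ∈ s, 1 - t i ≤ u i) : 0 ≤ ∏ i ∈ s, u i ∧ ∏ i ∈ s, u i ≤ 1 ∧ 1 - ∑ i ∈ s, t i ≤ ∏ i ∈ s, u i := by
  classical
  induction s using Finset.induction_on with
  | empty => simp
  | insert i s hi ih =>
    rw [Finset.prod_insert hi, Finset.sum_insert hi]
    obtain ⟨a, b, c⟩ := ih (fun j hj => h0 j (Finset.mem_insert_of_mem hj)) (fun j hj => h1 j (Finset.mem_insert_of_mem hj))
      (fun j hj => ht j (Finset.mem_insert_of_mem hj))
    have a' := h0 i (Finset.mem_insert_self i s)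
    have b' := h1 i (Finset.mem_insert_self i s)
    have c' := ht i (Finset.mem_insert_self i s)
    refine ⟨mul_nonneg a' a, mul_le_one₀ b' a b, ?_⟩
    nlinarith [mul_nonneg (sub_nonneg.2 b') (sub_nonneg.2 b)]

open Classical in
noncomputable def fI (p : ℕ) (a b : ZMod p) : ℝ := if a = 0 ∧ b = 0 then 0 else 1

theorem fI_sum (p : ℕ) [NeZero p] : ∑ a, ∑ b, fI p a b = (p : ℝ) ^ 2 * (1 - 1 / (p : ℝ) ^ 2) := by
  have hp : (p : ℝ) ≠ 0 := Nat.cast_ne_zero.2 (NeZero.ne p)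
  have : ∀ a b : ZMod p, fI p a b = 1 - (if a = 0 then (if b = 0 then (1 : ℝ) else 0) else 0) := by
    intro a b
    unfold fI
    by_cases h : a = 0 <;> by_cases h' : b = 0 <;> simp [h, h']
  simp only [this, Finset.sum_sub_distrib]
  rw [Finset.sum_comm]
  simp [ZMod.card]
  field_simp

theorem fI_scale (p : ℕ) (hp : p.Prime) (d a b : ZMod p) (hd : d ≠ 0) : fI p (d ^ 4 * a) (d ^ 6 * b) = fI p a b := by
  haveI : Fact p.Prime := ⟨hp⟩
  simp [fI, hd]

theorem fI_zero (p : ℕ) : fI p 0 0 = 0 := by simp [fI]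

theorem fI_bound (p : ℕ) (a b : ZMod p) : |fI p a b| ≤ 1 := by
  unfold fI; split_ifs <;> simp

open Classical in
theorem fin_count (M N p : ℕ) (x : ℝ) (hx : 1 ≤ x) (hM : (M : ℝ) ≤ x ^ 4) (hN : (N : ℝ) ≤ x ^ 6) (hp : 1 ≤ p)
    (hpx : (p : ℝ) ≤ x ^ 4) :
    ∑ AB ∈ Finset.Icc (-(M : ℤ)) M ×ˢ Finset.Icc (-(N : ℤ)) N, (1 - fI p (AB.1 : ZMod p) (AB.2 : ZMod p))
      ≤ 9 * (1 / (p : ℝ)) * x ^ 10 := by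
  have hpR : (1 : ℝ) ≤ p := by exact_mod_cast hp
  have e : ∑ AB ∈ Finset.Icc (-(M : ℤ)) M ×ˢ Finset.Icc (-(N : ℤ)) N, (1 - fI p (AB.1 : ZMod p) (AB.2 : ZMod p))
     = (2 * ((M / p : ℕ) : ℝ) + 1) * (2 * ((N / p : ℕ) : ℝ) + 1) := by
    rw [Finset.sum_product]
    have c : ∀ n : ℕ, ∑ A ∈ Finset.Icc (-(n : ℤ)) n, (if (p : ℤ) ∣ A then (1 : ℝ) else 0) = 2 * ((n / p : ℕ) : ℝ) + 1 := by
      intro n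
      rw [← Finset.sum_filter, sv_dvd_sum (fun _ => (1 : ℝ)) p n hp]
      simp only [Finset.sum_const, Int.card_Icc, nsmul_eq_mul, mul_one]
      have : ((((n / p : ℕ) : ℤ) + 1 - -((n / p : ℕ) : ℤ)).toNat) = 2 * (n / p) + 1 := by omega
      rw [this]; push_cast; rfl
    rw [← c M, ← c N, Finset.sum_mul_sum]
    apply Finset.sum_congr rfl; intro A _
    apply Finset.sum_congr rfl; intro B _
    unfold fI
    simp only [ZMod.intCast_zmod_eq_zero_iff_dvd]
    by_cases h : (p : ℤ) ∣ A <;> by_cases h' : (p : ℤ) ∣ B <;> simp [h, h']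
  rw [e]
  have x46 : x ^ 4 ≤ x ^ 6 := pow_le_pow_right₀ hx (by norm_num)
  have g : ∀ (n : ℕ) (y : ℝ), (n : ℝ) ≤ y → (p : ℝ) ≤ y → 2 * ((n / p : ℕ) : ℝ) + 1 ≤ 3 * (y / p) := by
    intro n y h1 h2
    have a1 : ((n / p : ℕ) : ℝ) ≤ y / p := Nat.cast_div_le.trans (by gcongr)
    have a2 : 1 ≤ y / p := by rw [le_div_iff₀ (by linarith)]; linarith
    linarith
  calc _ ≤ 3 * (x ^ 4 / p) * (3 * (x ^ 6 / p)) := by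
        gcongr
        · exact g M _ hM hpx
        · exact g N _ hN (hpx.trans x46)
    _ = 9 * (1 / (p : ℝ)) * x ^ 10 * (1 / (p : ℝ)) := by ring
    _ ≤ 9 * (1 / (p : ℝ)) * x ^ 10 * 1 := by
        gcongr
        rw [div_le_one (by linarith)]; exact hpR
    _ = _ := by ring

theorem fin_card (k : ℕ) (p : Fin k → ℕ) (hp5 : ∀ i, 5 ≤ p i) (X : ℝ) (hX : 2 ≤ X) (ε : ℝ) (hε : 0 < ε)
    (hP : (∏ i, (p i : ℝ)) ≤ X ^ ((1 : ℝ) / 3 - ε)) (G : ℤ × ℤ → ℝ) :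
    |(∑ᶠ AB ∈ Efam X, G AB) - ((Efam X).ncard : ℝ)
      - ∑ᶠ AB ∈ Efam X, (G AB - ∏ i, fI (p i) (AB.1 : ZMod (p i)) (AB.2 : ZMod (p i)))|
      ≤ 9 * ((∑ i, 1 / (p i : ℝ)) * X ^ ((5 : ℝ) / 6)) := by
  classical
  obtain ⟨M, N, x, hx1, hM, hN, hx6, hx10, hx4, hbox⟩ := sv_floor X hX
  rw [sv_Efam X M N hbox, Set.ncard_coe_finset, finsum_mem_coe_finset, finsum_mem_coe_finset]
  set Bx := Finset.Icc (-(M : ℤ)) M ×ˢ Finset.Icc (-(N : ℤ)) N with hBx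
  set S := Bx.filter (fun AB => CondM AB.1 AB.2 ∧ 4 * AB.1 ^ 3 + 27 * AB.2 ^ 2 ≠ 0) with hS
  have key : ∀ AB : ℤ × ℤ, 0 ≤ 1 - ∏ i, fI (p i) (AB.1 : ZMod (p i)) (AB.2 : ZMod (p i)) ∧
      1 - ∏ i, fI (p i) (AB.1 : ZMod (p i)) (AB.2 : ZMod (p i))
        ≤ ∑ i, (1 - fI (p i) (AB.1 : ZMod (p i)) (AB.2 : ZMod (p i))) := by
    intro AB
    obtain ⟨a, b, c⟩ := fin_prod Finset.univ (fun i => fI (p i) (AB.1 : ZMod (p i)) (AB.2 : ZMod (p i)))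
      (fun i => 1 - fI (p i) (AB.1 : ZMod (p i)) (AB.2 : ZMod (p i)))
      (fun i _ => by unfold fI; split_ifs <;> norm_num) (fun i _ => by unfold fI; split_ifs <;> norm_num)
      (fun i _ => by simp)
    exact ⟨by linarith, by linarith⟩
  have e : (∑ AB ∈ S, G AB) - (S.card : ℝ) - ∑ AB ∈ S, (G AB - ∏ i, fI (p i) (AB.1 : ZMod (p i)) (AB.2 : ZMod (p i)))
     = - ∑ AB ∈ S, (1 - ∏ i, fI (p i) (AB.1 : ZMod (p i)) (AB.2 : ZMod (p i))) := by
    simp only [Finset.sum_sub_distrib, Finset.sum_const, nsmul_eq_mul, mul_one]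
    ring
  rw [e, abs_neg, abs_of_nonneg (Finset.sum_nonneg (fun AB _ => (key AB).1))]
  have hpx : ∀ i, (p i : ℝ) ≤ x ^ 4 := by
    intro i
    rw [hx4]
    calc (p i : ℝ) ≤ ∏ i, (p i : ℝ) := by
          have : p i ∣ ∏ i, p i := Finset.dvd_prod_of_mem p (Finset.mem_univ i)
          have h := Nat.le_of_dvd (Finset.prod_pos (fun j _ => by have := hp5 j; omega)) this
          exact_mod_cast h
      _ ≤ _ := hP
      _ ≤ _ := Real.rpow_le_rpow_of_exponent_le (by linarith) (by linarith)
  calc _ ≤ ∑ AB ∈ Bx, (1 - ∏ i, fI (p i) (AB.1 : ZMod (p i)) (AB.2 : ZMod (p i))) :=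
        Finset.sum_le_sum_of_subset_of_nonneg (Finset.filter_subset _ _) (fun AB _ _ => (key AB).1)
    _ ≤ ∑ AB ∈ Bx, ∑ i, (1 - fI (p i) (AB.1 : ZMod (p i)) (AB.2 : ZMod (p i))) :=
        Finset.sum_le_sum (fun AB _ => (key AB).2)
    _ = ∑ i, ∑ AB ∈ Bx, (1 - fI (p i) (AB.1 : ZMod (p i)) (AB.2 : ZMod (p i))) := Finset.sum_comm
    _ ≤ ∑ i, 9 * (1 / (p i : ℝ)) * x ^ 10 := Finset.sum_le_sum (fun i _ =>
        fin_count M N (p i) x hx1 hM hN (by have := hp5 i; omega) (hpx i))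
    _ = _ := by rw [← hx10, ← Finset.sum_mul, ← Finset.mul_sum]; ring

theorem stmt_19 (k : ℕ) (hk : 1 ≤ k) (ε : ℝ) (hε : 0 < ε) (hε3 : ε < 1 / 3)
    (e r : Fin k → ℕ)
    (her : ∀ i, (e i = 1 ∧ (Odd (r i) ∨ r i = 2)) ∨ (e i = 2 ∧ r i = 1)) :
    ∃ C : ℝ, 0 < C ∧ ∀ (X : ℝ), 2 ≤ X →
      ∀ (p : Fin k → ℕ) (hp : ∀ i, (p i).Prime), (∀ i, 5 ≤ p i) →
      Function.Injective p → (∏ i, (p i : ℝ)) ≤ X ^ ((1 : ℝ) / 3 - ε) →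
      ((∃ j, e j = 1 ∧ Odd (r j)) →
        |∑ᶠ AB ∈ Efam X, ∏ i, (lamPow (p i) (hp i) AB.1 AB.2 (e i)) ^ (r i)|
          ≤ C * 2 ^ (sInf {n : ℕ | Odd n ∧ ∃ i, r i = n}) * (∏ i, (p i : ℝ))
              * X ^ ((1 : ℝ) / 2))
      ∧ (¬ (∃ j, e j = 1 ∧ Odd (r j)) →
        |(∑ᶠ AB ∈ Efam X, ∏ i, (lamPow (p i) (hp i) AB.1 AB.2 (e i)) ^ (r i))
            - (if ∀ i, e i = 1 ∧ r i = 2 then (1 : ℝ) else 0) * ((Efam X).ncard : ℝ)|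
          ≤ C * ((∏ i, (p i : ℝ)) * X ^ ((1 : ℝ) / 2)
              + (∑ i, 1 / (p i : ℝ)) * X ^ ((5 : ℝ) / 6))) := by
  set K : ℝ := ∏ i, (2305 : ℝ) ^ (r i) with hKdef
  have hK0 : 0 ≤ K := Finset.prod_nonneg (fun i _ => by positivity)
  refine ⟨27 * (K + 1) + 36, by positivity, ?_⟩
  intro X hX p hp hp5 hinj hP
  haveI hF : ∀ i, Fact (p i).Prime := fun i => ⟨hp i⟩
  haveI hne : ∀ i, NeZero (p i) := fun i => ⟨(hp i).ne_zero⟩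
  haveI hnP : NeZero (∏ i, p i) := ⟨Finset.prod_ne_zero_iff.2 (fun i _ => (hp i).ne_zero)⟩
  have hc : Pairwise (Function.onFun Nat.Coprime p) := fun i j hij =>
    (Nat.coprime_primes (hp i) (hp j)).2 (fun h => hij (hinj h))
  have hPc : ((∏ i, p i : ℕ) : ℝ) = ∏ i, (p i : ℝ) := by push_cast; rfl
  have hr0 : ∀ i, r i ≠ 0 := by
    intro i h
    rcases her i with ⟨_, h' | h'⟩ | ⟨_, h'⟩
    · rw [h] at h'; exact absurd h' (by decide)
    · omega
    · omega
  have hpR : ∀ i, (5 : ℝ) ≤ p i := fun i => by exact_mod_cast hp5 i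
  set f : ∀ i, ZMod (p i) → ZMod (p i) → ℝ := fun i a b => lamF (p i) (e i) a b ^ (r i) with hf
  have hf0 : ∀ i, f i 0 0 = 0 := fun i => by
    simp only [hf]; rw [lamF_zero (hp5 i)]; exact zero_pow (hr0 i)
  have hfs : ∀ i (d a b : ZMod (p i)), d ≠ 0 → f i (d ^ 4 * a) (d ^ 6 * b) = f i a b := fun i d a b hd => by
    simp only [hf]; rw [lamF_scale _ _ _ _ hd]
  have hfb : ∀ i a b, |f i a b| ≤ (2305 : ℝ) ^ (r i) := fun i a b => by
    simp only [hf]; rw [abs_pow]; exact pow_le_pow_left₀ (abs_nonneg _) (lamF_bound (hp5 i) _ _ _) _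
  have hGeq : ∀ AB : ℤ × ℤ, ∏ i, (lamPow (p i) (hp i) AB.1 AB.2 (e i)) ^ (r i)
      = fG p f (AB.1 : ZMod (∏ i, p i)) (AB.2 : ZMod (∏ i, p i)) := by
    intro AB
    rw [fG_int]
    apply Finset.prod_congr rfl
    intro i _
    rw [lamPow_eq (hp5 i)]
  simp only [hGeq]
  have hX0 : 0 ≤ X := by linarith
  have hXh : 0 ≤ X ^ ((1 : ℝ) / 2) := Real.rpow_nonneg hX0 _
  have hXf : 0 ≤ X ^ ((5 : ℝ) / 6) := Real.rpow_nonneg hX0 _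
  have hPP : 0 ≤ ∏ i, (p i : ℝ) := Finset.prod_nonneg (fun i _ => by positivity)
  have hSS : 0 ≤ ∑ i, 1 / (p i : ℝ) := Finset.sum_nonneg (fun i _ => by positivity)
  have hY : 0 ≤ (∏ i, (p i : ℝ)) * X ^ ((1 : ℝ) / 2) := mul_nonneg hPP hXh
  have hZ : 0 ≤ (∑ i, 1 / (p i : ℝ)) * X ^ ((5 : ℝ) / 6) := mul_nonneg hSS hXf
  constructor
  · rintro ⟨j, hj1, hj2⟩
    have hsum : ∑ a, ∑ b, fG p f a b = 0 := by
      rw [fG_sum p hc]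
      apply Finset.prod_eq_zero (Finset.mem_univ j)
      simp only [hf, hj1]
      exact lamF_odd_sum (hp5 j) _ hj2
    have := sv_main (fG p f) K 0 (fG_bound p f _ hfb) le_rfl (by rw [hsum]; simp) (fG_zero hk p f hf0)
      (fG_cop p hp f hfs) (fG_ncop p hp f hf0) X hX
    refine this.trans ?_
    rw [hPc]
    have h2 : (1 : ℝ) ≤ 2 ^ (sInf {n : ℕ | Odd n ∧ ∃ i, r i = n}) := one_le_pow₀ (by norm_num)
    set t : ℝ := 2 ^ (sInf {n : ℕ | Odd n ∧ ∃ i, r i = n})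
    calc _ = 27 * K * ((∏ i, (p i : ℝ)) * X ^ ((1 : ℝ) / 2)) := by ring
      _ ≤ ((27 * (K + 1) + 36) * t) * ((∏ i, (p i : ℝ)) * X ^ ((1 : ℝ) / 2)) := by
        refine mul_le_mul_of_nonneg_right ?_ hY
        nlinarith
      _ = _ := by ring
  · intro hodd
    have hcase : ∀ i, (e i = 1 ∧ r i = 2) ∨ (e i = 2 ∧ r i = 1) := by
      intro i
      rcases her i with ⟨h, h' | h'⟩ | h
      · exact absurd ⟨i, h, h'⟩ hodd
      · exact Or.inl ⟨h, h'⟩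
      · exact Or.inr h
    have hmean1 : ∀ i, e i = 1 → r i = 2 → ∑ a, ∑ b, f i a b = (p i : ℝ) ^ 2 * (1 - 1 / p i) := by
      intro i h1 h2
      rw [← lamF_sq_sum (hp5 i)]
      simp only [hf, h1, h2]
      rfl
    have hmean2 : ∀ i, e i = 2 → r i = 1 → |∑ a, ∑ b, f i a b| ≤ (p i : ℝ) ^ 2 * (1 / p i) := by
      intro i h1 h2
      have := lamF_two_sum (hp5 i)
      simpa only [hf, h1, h2, pow_one] using this
    have hinv : ∀ i, 1 / (p i : ℝ) ≤ 1 := fun i => by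
      rw [div_le_one (by linarith [hpR i])]; linarith [hpR i]
    have hinv0 : ∀ i, 0 ≤ 1 / (p i : ℝ) := fun i => by positivity
    by_cases hall : ∀ i, e i = 1 ∧ r i = 2
    · rw [if_pos hall, one_mul]
      have hs1 : ∑ a, ∑ b, fG p f a b = (∏ i, (p i : ℝ)) ^ 2 * ∏ i, (1 - 1 / (p i : ℝ)) := by
        rw [fG_sum p hc, ← Finset.prod_pow, ← Finset.prod_mul_distrib]
        exact Finset.prod_congr rfl (fun i _ => hmean1 i (hall i).1 (hall i).2)
      have hs2 : ∑ a, ∑ b, fG p (fun i => fI (p i)) a b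
          = (∏ i, (p i : ℝ)) ^ 2 * ∏ i, (1 - 1 / (p i : ℝ) ^ 2) := by
        rw [fG_sum p hc, ← Finset.prod_pow, ← Finset.prod_mul_distrib]
        exact Finset.prod_congr rfl (fun i _ => fI_sum (p i))
      have hsq : ∀ i, 0 ≤ 1 / (p i : ℝ) ^ 2 ∧ 1 / (p i : ℝ) ^ 2 ≤ 1 / (p i : ℝ) := by
        intro i
        refine ⟨by positivity, ?_⟩
        rw [show 1 / (p i : ℝ) ^ 2 = 1 / (p i : ℝ) * (1 / (p i : ℝ)) by ring]
        nlinarith [hinv i, hinv0 i]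
      obtain ⟨-, b1, c1⟩ := fin_prod Finset.univ (fun i => 1 - 1 / (p i : ℝ)) (fun i => 1 / (p i : ℝ))
        (fun i _ => by linarith [hinv i]) (fun i _ => by linarith [hinv0 i]) (fun i _ => le_rfl)
      obtain ⟨-, b2, c2⟩ := fin_prod Finset.univ (fun i => 1 - 1 / (p i : ℝ) ^ 2) (fun i => 1 / (p i : ℝ))
        (fun i _ => by linarith [hinv i, (hsq i).2]) (fun i _ => by linarith [(hsq i).1])
        (fun i _ => by linarith [(hsq i).2])
      have main := sv_main (fun a b => fG p f a b - fG p (fun i => fI (p i)) a b) (K + 1) (∑ i, 1 / (p i : ℝ))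
        (fun a b => (abs_sub _ _).trans (add_le_add (fG_bound p f _ hfb a b)
          ((fG_bound p (fun i => fI (p i)) (fun _ => 1) (fun i => fI_bound (p i)) a b).trans (by simp)))) hSS
        (by
          simp only [Finset.sum_sub_distrib]
          rw [hs1, hs2, hPc, ← mul_sub, abs_mul, abs_of_nonneg (by positivity : 0 ≤ (∏ i, (p i : ℝ)) ^ 2)]
          gcongr
          rw [abs_le]; constructor <;> linarith)
        (by
          rw [fG_zero hk p f hf0, fG_zero hk p _ (fun i => fI_zero (p i)), sub_zero])
        (fun d hd a b => by
          rw [fG_cop p hp f hfs d hd, fG_cop p hp _ (fun i => fI_scale (p i) (hp i)) d hd])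
        (fun d hd a b => by
          rw [fG_ncop p hp f hf0 d hd, fG_ncop p hp _ (fun i => fI_zero (p i)) d hd, sub_zero])
        X hX
      have cnt := fin_card k p hp5 X hX ε hε hP (fun AB => fG p f (AB.1 : ZMod (∏ i, p i)) (AB.2 : ZMod (∏ i, p i)))
      simp only [fG_int p (fun i => fI (p i))] at main
      rw [hPc] at main
      set S1 := ∑ᶠ AB ∈ Efam X, fG p f (AB.1 : ZMod (∏ i, p i)) (AB.2 : ZMod (∏ i, p i))
      set S2 := ∑ᶠ AB ∈ Efam X, (fG p f (AB.1 : ZMod (∏ i, p i)) (AB.2 : ZMod (∏ i, p i))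
        - ∏ i, fI (p i) (AB.1 : ZMod (p i)) (AB.2 : ZMod (p i)))
      have e1 : S1 - ((Efam X).ncard : ℝ) = S2 + (S1 - ((Efam X).ncard : ℝ) - S2) := by ring
      rw [e1]
      refine (abs_add_le _ _).trans ((add_le_add main cnt).trans ?_)
      have := mul_nonneg hK0 hY
      have := mul_nonneg hK0 hZ
      nlinarith
    · rw [if_neg hall, zero_mul, sub_zero]
      push Not at hall
      obtain ⟨j, hj⟩ := hall
      have hj2 : e j = 2 ∧ r j = 1 := by
        rcases hcase j with h | h
        · exact absurd h.2 (hj h.1)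
        · exact h
      have hle : ∀ i, |∑ a, ∑ b, f i a b| ≤ (p i : ℝ) ^ 2 := by
        intro i
        have h2 : 0 ≤ (p i : ℝ) ^ 2 := by positivity
        rcases hcase i with h | h
        · rw [hmean1 i h.1 h.2, abs_of_nonneg (mul_nonneg h2 (by linarith [hinv i]))]
          nlinarith [hinv0 i]
        · exact (hmean2 i h.1 h.2).trans (by nlinarith [hinv i])
      have hs : |∑ a, ∑ b, fG p f a b| ≤ ((∏ i, p i : ℕ) : ℝ) ^ 2 * ∑ i, 1 / (p i : ℝ) := by
        rw [fG_sum p hc, Finset.abs_prod, hPc]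
        rw [← Finset.mul_prod_erase _ _ (Finset.mem_univ j), ← Finset.prod_pow,
          ← Finset.mul_prod_erase Finset.univ (fun i => (p i : ℝ) ^ 2) (Finset.mem_univ j)]
        calc _ ≤ ((p j : ℝ) ^ 2 * (1 / p j)) * ∏ i ∈ Finset.univ.erase j, (p i : ℝ) ^ 2 := by
              apply mul_le_mul (hmean2 j hj2.1 hj2.2) _ (Finset.prod_nonneg (fun i _ => abs_nonneg _)) (by positivity)
              exact Finset.prod_le_prod (fun i _ => abs_nonneg _) (fun i _ => hle i)
          _ = (p j : ℝ) ^ 2 * (∏ i ∈ Finset.univ.erase j, (p i : ℝ) ^ 2) * (1 / p j) := by ring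
          _ ≤ _ := by
              gcongr
              exact Finset.single_le_sum (f := fun i => 1 / (p i : ℝ)) (fun i _ => hinv0 i) (Finset.mem_univ j)
      have main := sv_main (fG p f) K (∑ i, 1 / (p i : ℝ)) (fG_bound p f _ hfb) hSS hs (fG_zero hk p f hf0)
        (fG_cop p hp f hfs) (fG_ncop p hp f hf0) X hX
      refine main.trans ?_
      rw [hPc]
      have := mul_nonneg hK0 hY
      have := mul_nonneg hK0 hZ
      nlinarith
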